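/- arXiv:2011.01791 — 7 statements merged into one kernel-verified Lean document; each statement's English description precedes it below -/
import Mathlib

section
/- In any identical singleton congestion game (ISCG), for any a priori given partition coalition structure C, there exists a feasible allocation a that is simultaneously: (i) a Nash equilibrium, i.e., P_{=1}(N)-stable, (ii) Pareto efficient, i.e., {N}-stable, and (iii) a partition equilibrium, i.e., C-stable. -/
/-!
Describe an allocation by the assignment `α : N → M` of agents to resources. Write `x i` for the
load of the resource `i` and `p i` for the number of members of a coalition `c` on `i`. Among all
feasible assignments take one minimizing first `∑ i, x i ^ 2` and then the sum of
`∑ i, p i ^ 2` over all `c ∈ C`.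

*Pareto efficiency.* `∑ i, x i ^ 2` is the sum over all agents of the load they experience, so a
blocking by `N` would lower it. *Nash stability.* A profitable deviation of one agent moves a unit
of load from `s` to `t` with `x t + 1 < x s`, which lowers the sum of squares.

*Stability under `c ∈ C`.* Minimality gives an exchange property (`ExchangeStable`): if members
of `c` can be reallocated so that in effect one unit is shifted from `s` to `t`, then
`x s ≤ x t + 1`, and if equality holds then `p s ≤ p t + 1`; here the other coalitions do not
interfere because they are disjoint from `c`. Let every member of `c` pay `(n + 1) ^ load`, where
`n` is the number of agents. The total payment is `∑ i, p i * (n + 1) ^ x i`, a separable convex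
function of `p`, and the exchange property says that no single shift lowers it. Any reallocation of
`c` with different counts contains such a shift (`exists_shift`), and by convexity undoing it does
not raise the payment; hence `α` minimizes the payment (`ExchangeStable.sum_le`). A blocking by `c`
would lower it strictly.
-/

variable {N M : Type*} [Fintype N] [DecidableEq N] [Fintype M] [DecidableEq M]

/-- `a` is an allocation: resources hold pairwise disjoint sets of agents whose union is `N`. -/
def IsAllocation (a : M → Finset N) : Prop :=
  (∀ i₁ i₂ : M, i₁ ≠ i₂ → Disjoint (a i₁) (a i₂)) ∧ (∀ j : N, ∃ i : M, j ∈ a i)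

/-- `a` respects the feasibility constraint `f`. -/
def Feasible (f a : M → Finset N) : Prop := ∀ i : M, a i ⊆ f i

/-- Coalition `c` blocks allocation `a` via the (feasible) allocation `abar`. -/
def BlocksVia (f : M → Finset N) (c : Finset N) (a abar : M → Finset N) : Prop :=
  IsAllocation abar ∧ Feasible f abar ∧
  (∀ i : M, a i \ c = abar i \ c) ∧
  (∀ j ∈ c, ∀ i₁ i₂ : M, j ∈ a i₁ → j ∈ abar i₂ → (abar i₂).card ≤ (a i₁).card) ∧
  (∃ j ∈ c, ∃ i₁ i₂ : M, j ∈ a i₁ ∧ j ∈ abar i₂ ∧ (abar i₂).card < (a i₁).card)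

/-- Coalition `c` blocks allocation `a`. -/
def Blocks (f : M → Finset N) (c : Finset N) (a : M → Finset N) : Prop :=
  ∃ abar : M → Finset N, BlocksVia f c a abar

/-- The kernel of `a`: the list of resource cardinalities, in nonincreasing order. -/
def kernel (a : M → Finset N) : List ℕ :=
  ((Finset.univ.val.map fun i : M => (a i).card).sort (· ≤ ·)).reverse

/-- The `c`-kernel of `a`: the list `(|c ∩ a i|)_{i ∈ M}`, in nonincreasing order. -/
def ckernel (c : Finset N) (a : M → Finset N) : List ℕ :=
  ((Finset.univ.val.map fun i : M => (c ∩ a i).card).sort (· ≤ ·)).reverse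

/-- The `c`-welfare-kernel of `a`: the list `(|c_n|, |c_{n-1}|, …, |c_1|)`, where `c_s` is the set
of members of `c` assigned to a resource of cardinality `s`, and `n` is the number of agents. -/
def wkernel (c : Finset N) (a : M → Finset N) : List ℕ :=
  (List.range (Fintype.card N)).map fun t =>
    (c.filter fun j => ∃ i : M, j ∈ a i ∧ (a i).card = Fintype.card N - t).card

/-- `a` C-balance dominates `abar`. -/
def BalanceDominates (C : Set (Finset N)) (a abar : M → Finset N) : Prop :=
  List.Lex (· < ·) (kernel a) (kernel abar) ∨
  (kernel a = kernel abar ∧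
    (∀ c ∈ C, ckernel c a = ckernel c abar ∨ List.Lex (· < ·) (ckernel c a) (ckernel c abar)) ∧
    (∃ c ∈ C, List.Lex (· < ·) (ckernel c a) (ckernel c abar)))

/-- `C` is a partition coalition structure. -/
def IsPartitionStructure (C : Set (Finset N)) : Prop :=
  (∀ c ∈ C, c.Nonempty) ∧
  (∀ c ∈ C, ∀ c' ∈ C, c ≠ c' → Disjoint c c') ∧
  (∀ j : N, ∃ c ∈ C, j ∈ c)

open Finset

set_option linter.unusedSectionVars false

/-- The number of members of `c` that the assignment `α : N → M` sends to the resource `i`. -/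
def cnt (c : Finset N) (α : N → M) (i : M) : ℕ :=
  #{j ∈ c | α j = i}

/-! ### Counts of coalition members and shifts of one unit of load -/

lemma sum_cnt (c : Finset N) (α : N → M) : ∑ i, cnt c α i = #c :=
  (card_eq_sum_card_fiberwise (fun j _ => mem_univ (α j))).symm

lemma sum_comp_eq_sum_cnt (c : Finset N) (α : N → M) (φ : M → ℕ) :
    ∑ j ∈ c, φ (α j) = ∑ i, cnt c α i * φ i := by
  rw [← sum_fiberwise_of_maps_to (g := α) (t := univ) (fun j _ => mem_univ (α j))]
  refine sum_congr rfl fun i _ => ?_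
  rw [sum_congr rfl (g := fun _ => φ i) (fun j hj => by rw [(mem_filter.1 hj).2])]
  simp [cnt]

lemma cnt_univ_eq (c : Finset N) (α : N → M) (i : M) :
    cnt univ α i = cnt cᶜ α i + cnt c α i := by
  unfold cnt
  rw [add_comm, ← card_union_of_disjoint
    (disjoint_filter_filter disjoint_compl_right), ← filter_union, union_compl]

lemma cnt_congr {c : Finset N} {α β : N → M} (h : ∀ j ∈ c, α j = β j) (i : M) :
    cnt c α i = cnt c β i := by
  unfold cnt
  rw [filter_congr fun j hj => by rw [h j hj]]

/-- Swapping the values of `α` and `β` on `J` preserves the total number of assignments to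
each resource. -/
lemma cnt_piecewise_add (c J : Finset N) (α β : N → M) (i : M) :
    cnt c (J.piecewise β α) i + cnt c (J.piecewise α β) i = cnt c α i + cnt c β i := by
  simp only [cnt, card_filter, ← sum_add_distrib]
  refine sum_congr rfl fun j _ => ?_
  by_cases hj : j ∈ J
  · simp only [piecewise_eq_of_mem _ _ _ hj, add_comm]
  · simp only [piecewise_eq_of_notMem _ _ _ hj]

/-- A walk from the surplus resource `s` along agents who move between `α` and `β`, continued as
long as possible, ends in a deficit resource `t`; moving only the agents of the walk shifts
one unit of load from `s` to `t`. The walk is recorded by the set `J` of its agents, taken of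
maximal size: an agent still on the current end with another target would extend it. -/
lemma exists_shift {c : Finset N} {α β : N → M} {s : M}
    (hs : cnt c β s < cnt c α s) :
    ∃ J : Finset N, J.Nonempty ∧ (∀ j ∈ J, α j ≠ β j) ∧ ∃ t, cnt c α t < cnt c β t ∧
      ∀ i, cnt c (J.piecewise β α) i + (if i = s then 1 else 0)
        = cnt c α i + (if i = t then 1 else 0) := by
  classical
  let P : Finset N → Prop := fun J => (∀ j ∈ J, α j ≠ β j) ∧ ∃ t,
      ∀ i, cnt c (J.piecewise β α) i + (if i = s then 1 else 0)
        = cnt c α i + (if i = t then 1 else 0)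
  obtain ⟨J, hJ, hmax⟩ := exists_max_image (univ.filter P) card
    ⟨∅, by simp only [mem_filter, mem_univ, true_and]; exact ⟨by simp, s, by simp⟩⟩
  obtain ⟨hJm, t, ht⟩ := (mem_filter.1 hJ).2
  by_cases hlt : cnt c α t < cnt c β t
  · refine ⟨J, ?_, hJm, t, hlt, ht⟩
    rw [nonempty_iff_ne_empty]
    rintro rfl
    have := ht t
    have hne : t ≠ s := by rintro rfl; omega
    simp [hne] at this
  · exfalso
    have hgt : cnt c β t < cnt c (J.piecewise β α) t := by
      have := ht t
      by_cases hts : t = s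
      · subst hts; simp at this; omega
      · simp [hts] at this; omega
    obtain ⟨j, hj, hj'⟩ := exists_mem_notMem_of_card_lt_card hgt
    simp only [mem_filter, not_and] at hj hj'
    have hβ := hj' hj.1
    have hjJ : j ∉ J := fun h => hβ (by simpa [h] using hj.2)
    have hα : α j = t := by simpa [hjJ] using hj.2
    have hmem : insert j J ∈ univ.filter P := by
      refine mem_filter.2 ⟨mem_univ _, ?_, β j, fun i => ?_⟩
      · intro k hk
        rcases mem_insert.1 hk with rfl | hk
        · rw [hα]; exact Ne.symm hβ
        · exact hJm k hk
      · have key : cnt c ((insert j J).piecewise β α) i + (if i = t then 1 else 0)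
            = cnt c (J.piecewise β α) i + (if i = β j then 1 else 0) := by
          simp only [cnt, card_filter]
          rw [← add_sum_erase _ _ hj.1,
            ← add_sum_erase _ (fun k => if J.piecewise β α k = i then 1 else 0) hj.1]
          have : ∑ k ∈ c.erase j, (if (insert j J).piecewise β α k = i then 1 else 0)
              = ∑ k ∈ c.erase j, (if J.piecewise β α k = i then 1 else 0) := by
            refine sum_congr rfl fun k hk => ?_
            rw [piecewise_insert, Function.update_of_ne (ne_of_mem_erase hk)]
          rw [this, hj.2, piecewise_insert_self]
          simp only [eq_comm (a := i)]
          omega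
        have := ht i
        omega
    have := hmax _ hmem
    rw [card_insert_of_notMem hjJ] at this
    omega

/-- Two families that agree off `{s, t}`: only the summands at `s` and `t` change. -/
lemma sum_two_point (φ : M → ℕ → ℕ) {u u' : M → ℕ} {s t : M} (hst : s ≠ t)
    (h : ∀ i, i ≠ s → i ≠ t → u' i = u i) :
    ∑ i, φ i (u' i) + φ s (u s) + φ t (u t) = ∑ i, φ i (u i) + φ s (u' s) + φ t (u' t) := by
  have hs : t ∈ univ.erase s := by simp [hst.symm]
  rw [← add_sum_erase univ _ (mem_univ s), ← add_sum_erase _ _ hs,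
    ← add_sum_erase univ (fun i => φ i (u i)) (mem_univ s),
    ← add_sum_erase _ (fun i => φ i (u i)) hs]
  have : ∑ i ∈ (univ.erase s).erase t, φ i (u' i) = ∑ i ∈ (univ.erase s).erase t, φ i (u i) := by
    refine sum_congr rfl fun i hi => ?_
    simp only [mem_erase] at hi
    rw [h i hi.2.1 hi.1]
  omega

lemma sum_sq_shift {u u' : M → ℕ} {s t : M} (hst : s ≠ t)
    (h : ∀ i, u' i + (if i = s then 1 else 0) = u i + (if i = t then 1 else 0)) :
    ∑ i, u' i ^ 2 + 2 * u s = ∑ i, u i ^ 2 + 2 * u t + 2 := by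
  have h1 := sum_two_point (fun _ k => k ^ 2) hst (u := u) (u' := u')
    (fun i his hit => by simpa [his, hit] using h i)
  have hs := h s
  have ht := h t
  simp [hst, hst.symm] at hs ht
  rw [ht, ← hs] at h1
  rw [← hs]
  nlinarith

/-! ### Marginal payments -/

/-- If each coalition member on a resource of load `x` pays `(D + 1) ^ x`, then on a resource with
`r` outsiders the last summand is the increase of the coalition's payment when the number of its
members goes from `k` to `k + 1`. -/
lemma marginal_eq (D r k : ℕ) :
    (k + 1) * (D + 1) ^ (r + (k + 1))
      = k * (D + 1) ^ (r + k) + (D + 1) ^ (r + k) * (k * D + D + 1) := by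
  rw [← add_assoc, pow_succ]; ring

lemma marginal_mono (D r : ℕ) {k l : ℕ} (h : k ≤ l) :
    (D + 1) ^ (r + k) * (k * D + D + 1) ≤ (D + 1) ^ (r + l) * (l * D + D + 1) := by
  have : k * D ≤ l * D := Nat.mul_le_mul_right _ h
  exact Nat.mul_le_mul (Nat.pow_le_pow_right (by omega) (by omega)) (by omega)

/-- Comparison of marginal payments at resources with different numbers of outsiders. If `x < y`,
the powers alone decide, since the base `D + 1` exceeds the number `k + 1` of members. -/
lemma marginal_le (D x y k l : ℕ) (hk : k + 1 ≤ D) (hxy : x ≤ y) (h : x = y → k ≤ l) :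
    (D + 1) ^ x * (k * D + D + 1) ≤ (D + 1) ^ y * (l * D + D + 1) := by
  rcases hxy.eq_or_lt with rfl | hlt
  · have : k * D ≤ l * D := Nat.mul_le_mul_right _ (h rfl)
    exact Nat.mul_le_mul_left _ (by omega)
  · calc (D + 1) ^ x * (k * D + D + 1) ≤ (D + 1) ^ x * ((D + 1) * (D + 1)) :=
        Nat.mul_le_mul_left _ (by nlinarith)
      _ = (D + 1) ^ (x + 1) * (D + 1) := by ring
      _ ≤ (D + 1) ^ y * (l * D + D + 1) :=
        Nat.mul_le_mul (Nat.pow_le_pow_right (by omega) hlt) (by omega)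

/-! ### Exchange stability -/

/-- The exchange property of `α` relative to the coalition `c`: any feasible reallocation of
members of `c` whose only effect on the loads is to shift one unit from `s` to `t` has
`load s ≤ load t + 1`, and in case of equality `c` has at most one more member on `s` than on `t`. -/
def ExchangeStable (f : M → Finset N) (c : Finset N) (α : N → M) : Prop :=
  ∀ (β : N → M) (s t : M), (∀ j, j ∈ f (β j)) → (∀ j ∉ c, β j = α j) → s ≠ t →
    (∀ i, cnt c β i + (if i = s then 1 else 0) = cnt c α i + (if i = t then 1 else 0)) →
    cnt univ α s ≤ cnt univ α t + 1 ∧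
    (cnt univ α s = cnt univ α t + 1 → cnt c α s ≤ cnt c α t + 1)

/-- With `n` the number of agents, an exchange-stable assignment minimizes `∑ (n + 1) ^ load`
over the members of `c`, among all feasible reallocations of `c`. The marginal costs are
monotone, so undoing one shift at a time leads from `β` back to `α` without raising the cost. -/
lemma ExchangeStable.sum_le {f : M → Finset N} {c : Finset N} {α : N → M}
    (hα : ∀ j, j ∈ f (α j)) (hex : ExchangeStable f c α) :
    ∀ (n : ℕ) (β : N → M), #{j | α j ≠ β j} = n → (∀ j, j ∈ f (β j)) → (∀ j ∉ c, β j = α j) →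
      ∑ i, cnt c α i * (Fintype.card N + 1) ^ (cnt cᶜ α i + cnt c α i)
        ≤ ∑ i, cnt c β i * (Fintype.card N + 1) ^ (cnt cᶜ α i + cnt c β i) := by
  intro n
  induction n using Nat.strong_induction_on with
  | _ n ih =>
  intro β hn hβ hoff
  by_cases hall : ∀ s, cnt c α s ≤ cnt c β s
  · have heq : ∀ i ∈ univ, cnt c α i = cnt c β i :=
      (sum_eq_sum_iff_of_le fun i _ => hall i).1 (by rw [sum_cnt, sum_cnt])
    exact le_of_eq (sum_congr rfl fun i hi => by rw [heq i hi])
  push Not at hall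
  obtain ⟨s, hs⟩ := hall
  obtain ⟨J, ⟨j₀, hj₀⟩, hJm, t, ht, hshift⟩ := exists_shift hs
  have hst : s ≠ t := by rintro rfl; omega
  have hfeas : ∀ (γ δ : N → M), (∀ j, j ∈ f (γ j)) → (∀ j, j ∈ f (δ j)) →
      ∀ j, j ∈ f (J.piecewise γ δ j) := by
    intro γ δ hγ hδ j
    by_cases hj : j ∈ J
    · simpa [hj] using hγ j
    · simpa [hj] using hδ j
  obtain ⟨h1, h2⟩ := hex (J.piecewise β α) s t (hfeas _ _ hβ hα)
    (fun j hj => by by_cases hjJ : j ∈ J <;> simp [hjJ, hoff j hj]) hst hshift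
  set β' := J.piecewise α β with hβ'
  have hcloser : #{j | α j ≠ β' j} < n := by
    rw [← hn]
    refine card_lt_card ⟨fun j => ?_, fun hsub => ?_⟩
    · by_cases hjJ : j ∈ J <;> simp [hβ', hjJ]
    · have := hsub (mem_filter.2 ⟨mem_univ j₀, hJm j₀ hj₀⟩)
      simp [hβ', hj₀] at this
  refine (ih _ hcloser β' rfl (hfeas _ _ hα hβ)
    (fun j hj => by by_cases hjJ : j ∈ J <;> simp [hβ', hjJ, hoff j hj])).trans ?_
  have hb : ∀ i, cnt c β' i + (if i = t then 1 else 0)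
      = cnt c β i + (if i = s then 1 else 0) := by
    intro i
    have := cnt_piecewise_add c J α β i
    rw [← hβ'] at this
    have := hshift i
    omega
  have hsum := sum_two_point (fun i k => k * (Fintype.card N + 1) ^ (cnt cᶜ α i + k)) hst
    (u := cnt c β) (u' := cnt c β') (fun i his hit => by simpa [his, hit] using hb i)
  have hbs := hb s
  have hbt := hb t
  simp only [hst, hst.symm, if_true, if_false, add_zero] at hbs hbt
  simp only [hbs, ← hbt, marginal_eq] at hsum
  rw [cnt_univ_eq c, cnt_univ_eq c] at h1 h2
  have hcard : cnt c α s ≤ Fintype.card N := card_le_univ _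
  have m1 := marginal_mono (Fintype.card N) (cnt cᶜ α s)
    (show cnt c β s ≤ cnt c α s - 1 by omega)
  have m2 := marginal_le (Fintype.card N) (cnt cᶜ α s + (cnt c α s - 1))
    (cnt cᶜ α t + cnt c α t) (cnt c α s - 1) (cnt c α t) (by omega) (by omega)
    (fun h => by have := h2 (by omega); omega)
  have m3 := marginal_mono (Fintype.card N) (cnt cᶜ α t)
    (show cnt c α t ≤ cnt c β' t by omega)
  omega

/-- The assignment underlying an allocation. -/
lemma exists_assignment {a : M → Finset N} (ha : IsAllocation a) :
    ∃ α : N → M, (∀ j i, j ∈ a i ↔ α j = i) ∧ ∀ i, #(a i) = cnt univ α i := by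
  choose α hα using ha.2
  have hiff : ∀ j i, j ∈ a i ↔ α j = i := by
    refine fun j i => ⟨fun h => ?_, fun h => h ▸ hα j⟩
    by_contra hne
    exact disjoint_left.1 (ha.1 _ _ hne) (hα j) h
  refine ⟨α, hiff, fun i => ?_⟩
  unfold cnt
  congr 1
  ext j
  simp [hiff]

/-! ### The theorem -/

/-- Theorem 1: in any ISCG, for any partition coalition structure `C`, there exists a feasible
allocation that is a Nash equilibrium, Pareto efficient, and `C`-stable. -/
theorem exists_nash_pareto_partition_stable
    {N M : Type*} [Fintype N] [DecidableEq N] [Fintype M] [DecidableEq M]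
    [Nonempty N] [Nonempty M]
    (f : M → Finset N) (hf : ∀ j : N, ∃ i : M, j ∈ f i)
    (C : Set (Finset N)) (hC : IsPartitionStructure C) :
    ∃ a : M → Finset N, IsAllocation a ∧ Feasible f a ∧
      (∀ j : N, ¬ Blocks f {j} a) ∧
      (¬ Blocks f Finset.univ a) ∧
      (∀ c ∈ C, ¬ Blocks f c a) := by
  classical
  let Φ : (N → M) → ℕ := fun β => ∑ i, cnt univ β i ^ 2
  let Ψ : (N → M) → ℕ := fun β => ∑ c with c ∈ C, ∑ i, cnt c β i ^ 2
  choose γ hγ using hf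
  obtain ⟨α, hαF, hmin⟩ := exists_min_image (univ.filter fun β : N → M => ∀ j, j ∈ f (β j))
    (fun β => toLex (Φ β, Ψ β)) ⟨γ, by simpa using hγ⟩
  have hα : ∀ j, j ∈ f (α j) := (mem_filter.1 hαF).2
  have hΦ : ∀ β : N → M, (∀ j, j ∈ f (β j)) → Φ α ≤ Φ β ∧ (Φ α = Φ β → Ψ α ≤ Ψ β) := by
    intro β hβ
    have := Prod.Lex.toLex_le_toLex.1 (hmin β (by simpa using hβ))
    rcases this with h | ⟨h, h'⟩
    · exact ⟨h.le, fun h' => absurd h' h.ne⟩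
    · exact ⟨h.le, fun _ => h'⟩
  have hload : ∀ (c : Finset N) (β : N → M) (s t : M), (∀ j, j ∈ f (β j)) →
      (∀ j ∉ c, β j = α j) → s ≠ t →
      (∀ i, cnt c β i + (if i = s then 1 else 0) = cnt c α i + (if i = t then 1 else 0)) →
      Φ β + 2 * cnt univ α s = Φ α + 2 * cnt univ α t + 2 := by
    intro c β s t hβ hoff hst hsh
    refine sum_sq_shift hst fun i => ?_
    have h1 := cnt_univ_eq c α i
    have h2 := cnt_univ_eq c β i
    have h3 := cnt_congr (c := cᶜ) (α := β) (β := α) (fun j hj => hoff j (mem_compl.1 hj)) i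
    have h4 := hsh i
    omega
  have hle : ∀ (c : Finset N) (β : N → M) (s t : M), (∀ j, j ∈ f (β j)) →
      (∀ j ∉ c, β j = α j) → s ≠ t →
      (∀ i, cnt c β i + (if i = s then 1 else 0) = cnt c α i + (if i = t then 1 else 0)) →
      cnt univ α s ≤ cnt univ α t + 1 := by
    intro c β s t hβ hoff hst hsh
    have h1 := hload c β s t hβ hoff hst hsh
    have h2 := (hΦ β hβ).1
    omega
  have hex : ∀ c ∈ C, ExchangeStable f c α := by
    intro c hc β s t hβ hoff hst hsh
    refine ⟨hle c β s t hβ hoff hst hsh, fun heq => ?_⟩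
    have h1 := hload c β s t hβ hoff hst hsh
    have h2 := (hΦ β hβ).2 (by omega)
    have hcm : c ∈ (univ.filter (· ∈ C) : Finset (Finset N)) := by simpa using hc
    -- Coalitions of a partition other than `c` do not meet `c`, so their counts do not change.
    have hrest : ∑ c' ∈ (univ.filter (· ∈ C)).erase c, ∑ i, cnt c' β i ^ 2
        = ∑ c' ∈ (univ.filter (· ∈ C)).erase c, ∑ i, cnt c' α i ^ 2 := by
      refine sum_congr rfl fun c' hc' => sum_congr rfl fun i _ => ?_
      obtain ⟨hne, hc'⟩ := mem_erase.1 hc'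
      have hdis := hC.2.1 c' (mem_filter.1 hc').2 c hc hne
      rw [cnt_congr (fun j hj => hoff j (disjoint_left.1 hdis hj))]
    have h3 := sum_sq_shift hst hsh
    simp only [Ψ] at h2
    rw [← add_sum_erase _ _ hcm, ← add_sum_erase _ (fun c => ∑ i, cnt c β i ^ 2) hcm,
      hrest] at h2
    omega
  -- The form in which blocking is used: an assignment `β` of the deviation.
  have hblock : ∀ c : Finset N, Blocks f c (fun i => {j | α j = i}) →
      ∃ β : N → M, (∀ j, j ∈ f (β j)) ∧ (∀ j ∉ c, β j = α j) ∧
        (∀ j ∈ c, cnt univ β (β j) ≤ cnt univ α (α j)) ∧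
        ∃ j ∈ c, cnt univ β (β j) < cnt univ α (α j) := by
    rintro c ⟨b, hb, hbf, hsame, hweak, j, hj, i₁, i₂, hj1, hj2, hlt⟩
    obtain ⟨β, hmem, hcard⟩ := exists_assignment hb
    refine ⟨β, fun j => hbf _ ((hmem j _).2 rfl), fun j hj => ?_, fun j hj => ?_, j, hj, ?_⟩
    · have h := hsame (α j)
      have : j ∈ b (α j) \ c := h ▸ by simp [hj]
      exact (hmem j _).1 (mem_sdiff.1 this).1
    · have := hweak j hj (α j) (β j) (by simp) ((hmem j _).2 rfl)
      rwa [hcard] at this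
    · rw [hcard, ← (hmem j _).1 hj2] at hlt
      simp only [mem_filter, mem_univ, true_and] at hj1
      rw [← hj1] at hlt
      exact hlt
  refine ⟨fun i => {j | α j = i}, ⟨fun i₁ i₂ h => ?_, fun j => ⟨α j, by simp⟩⟩, fun i j hj => ?_,
    fun j hb => ?_, fun hb => ?_, fun c hc hb => ?_⟩
  · exact disjoint_filter.2 fun j _ h1 h2 => h (h1 ▸ h2)
  · rw [← (mem_filter.1 hj).2]
    exact hα j
  · obtain ⟨β, hβ, hoff, -, k, hk, hlt⟩ := hblock _ hb
    obtain rfl := mem_singleton.1 hk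
    have hne : α k ≠ β k := by
      intro h
      have : β = α := funext fun l => by
        by_cases hl : l = k
        · rw [hl, h]
        · exact hoff l (by simpa using hl)
      rw [this] at hlt
      exact lt_irrefl _ hlt
    have hsh : ∀ i, cnt {k} β i + (if i = α k then 1 else 0)
        = cnt {k} α i + (if i = β k then 1 else 0) := by
      intro i
      simp only [cnt, card_filter, sum_singleton, eq_comm (a := i)]
      omega
    have h1 := hle {k} β _ _ hβ hoff hne hsh
    have h2 := hsh (β k)
    have h3 := cnt_univ_eq {k} α (β k)
    have h4 := cnt_univ_eq {k} β (β k)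
    have h5 := cnt_congr (c := {k}ᶜ) (α := β) (β := α)
      (fun j hj => hoff j (mem_compl.1 hj)) (β k)
    simp only [hne.symm, if_true, if_false] at h2
    omega
  · obtain ⟨β, hβ, -, hweak, k, hk, hlt⟩ := hblock _ hb
    have h1 := sum_lt_sum hweak ⟨k, hk, hlt⟩
    rw [sum_comp_eq_sum_cnt univ β (cnt univ β), sum_comp_eq_sum_cnt univ α (cnt univ α)] at h1
    have h2 := (hΦ β hβ).1
    simp only [Φ, sq] at h2
    omega
  · obtain ⟨β, hβ, hoff, hweak, k, hk, hlt⟩ := hblock _ hb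
    have h0 : 1 < Fintype.card N + 1 := by have := Fintype.card_pos (α := N); omega
    have h1 : ∑ j ∈ c, (Fintype.card N + 1) ^ cnt univ β (β j)
        < ∑ j ∈ c, (Fintype.card N + 1) ^ cnt univ α (α j) :=
      sum_lt_sum (fun j hj => Nat.pow_le_pow_right (by omega) (hweak j hj))
        ⟨k, hk, Nat.pow_lt_pow_right h0 hlt⟩
    rw [sum_comp_eq_sum_cnt c β (fun i => (Fintype.card N + 1) ^ cnt univ β i),
      sum_comp_eq_sum_cnt c α (fun i => (Fintype.card N + 1) ^ cnt univ α i)] at h1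
    have h2 := (hex c hc).sum_le hα _ β rfl hβ hoff
    have h3 : ∀ i, cnt cᶜ α i = cnt cᶜ β i :=
      cnt_congr (fun j hj => (hoff j (mem_compl.1 hj)).symm)
    simp only [cnt_univ_eq c] at h1
    simp only [h3] at h1 h2
    omega
end

section
/- In any identical singleton congestion game with a partition coalition structure C, every feasible allocation a that is maximal with respect to the C-balance dominance relation (i.e., no feasible allocation C-balance dominates a) is simultaneously a Nash equilibrium, Pareto efficient, and C-stable. -/
/-!
Allocations are encoded by assignments `γ : N → M`. Write `x i` for the load of `i` under the
maximal allocation `a`, `q i` for the number of members of the coalition `c` on `i`, and `y`, `r` for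
the corresponding numbers after a deviation of `c`.

A nonincreasing list is lexicographically smaller than another of the same length as soon as its sum
of weights `k * B ^ k`, for `B` large, is smaller (`lex_of_weight_lt`). For `c = N` this sum is
`∑ j, B ^ (load experienced by j)`, so a Pareto improvement would have a smaller kernel; likewise for
a single agent moving to a better resource.

For `c ∈ C`, consider the directed multigraph on the resources in which each `j ∈ c` is an edge from
its old to its new resource. Shifting agents along a trail from `i` to `t ≠ i` lowers `x i` and `q i`
by one, raises `x t` and `q t` by one, and changes nothing else, so maximality of `a` gives
`x i ≤ x t + 1`, and `q i ≤ q t + 1` in case of equality (`trail_bounds`). In particular a resource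
whose load increases does so by exactly one. Let `g v` be the largest value of
`P i = q i * T ^ x i - (q i - 1) * T ^ (x i - 1)` over all `i` from which a trail leads to `v`. It is
monotone along edges, so `∑ v, (r v - q v) * g v ≥ 0`. On the other hand, for `T` large the bounds
above give `q v * T ^ x v - r v * T ^ y v ≤ -(r v - q v) * g v` for every `v` (`vertex_bound`). Summing,
`∑ j ∈ c, T ^ (old load of j) ≤ ∑ j ∈ c, T ^ (new load of j)`, which is impossible when all members of
`c` weakly improve and one strictly improves.
-/

variable {N M : Type*} [Fintype N] [DecidableEq N] [Fintype M] [DecidableEq M]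

set_option linter.unusedSectionVars false

/-! ### Lexicographic comparison of sorted lists -/

/-- The values of `x` in nonincreasing order; `kernel` and `ckernel` are of this form. -/
def sortedDesc {M : Type*} [Fintype M] (x : M → ℕ) : List ℕ :=
  ((Finset.univ.val.map x).sort (· ≤ ·)).reverse

lemma lex_of_weight_lt (B : ℕ) (l₁ : List ℕ) : ∀ l₂ : List ℕ, l₁.length = l₂.length →
    l₂.length < B → l₂.Pairwise (· ≥ ·) →
    (l₁.map fun k => k * B ^ k).sum < (l₂.map fun k => k * B ^ k).sum →
    List.Lex (· < ·) l₁ l₂ := by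
  induction l₁ with
  | nil =>
    intro l₂ hl _ _ h
    have : l₂ = [] := List.length_eq_zero_iff.mp (by simpa using hl.symm)
    subst this
    simp at h
  | cons h₁ t₁ ih =>
    intro l₂ hl hB hs h
    cases l₂ with
    | nil => simp at hl
    | cons h₂ t₂ =>
      rcases lt_trichotomy h₁ h₂ with hlt | heq | hgt
      · exact List.Lex.rel hlt
      · subst heq
        refine List.Lex.cons (ih t₂ (by simpa using hl) ?_ (List.pairwise_cons.mp hs).2 ?_)
        · simp at hB; omega
        · simpa using h
      · exfalso
        -- every entry of the second list is at most `h₂ < h₁`, so `h₁` alone outweighs them all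
        have hle : ∀ k ∈ h₂ :: t₂, k ≤ h₂ := by
          intro k hk
          rcases List.mem_cons.mp hk with rfl | hk
          · exact le_rfl
          · exact (List.pairwise_cons.mp hs).1 k hk
        have hB0 : 0 < B := by omega
        have hub : ((h₂ :: t₂).map fun k => k * B ^ k).sum ≤ (h₂ :: t₂).length * (h₂ * B ^ h₂) := by
          have := List.sum_le_card_nsmul ((h₂ :: t₂).map fun k => k * B ^ k) (h₂ * B ^ h₂) (by
            intro w hw
            obtain ⟨k, hk, rfl⟩ := List.mem_map.mp hw
            exact Nat.mul_le_mul (hle k hk) (Nat.pow_le_pow_right hB0 (hle k hk)))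
          simpa using this
        have h1 : (h₂ :: t₂).length * (h₂ * B ^ h₂) ≤ B * (h₂ * B ^ h₂) :=
          Nat.mul_le_mul_right _ hB.le
        have h2 : B * (h₂ * B ^ h₂) ≤ h₁ * B ^ h₁ := by
          calc B * (h₂ * B ^ h₂) = h₂ * B ^ (h₂ + 1) := by ring
            _ ≤ h₁ * B ^ h₁ := Nat.mul_le_mul hgt.le (Nat.pow_le_pow_right hB0 hgt)
        have h3 : h₁ * B ^ h₁ ≤ ((h₁ :: t₁).map fun k => k * B ^ k).sum := by simp
        omega

lemma sortedDesc_lex {M : Type*} [Fintype M] (z x : M → ℕ) (B : ℕ) (hB : Fintype.card M < B)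
    (h : ∑ v, z v * B ^ z v < ∑ v, x v * B ^ x v) :
    List.Lex (· < ·) (sortedDesc z) (sortedDesc x) := by
  have hsum : ∀ w : M → ℕ,
      ((sortedDesc w).map fun k => k * B ^ k).sum = ∑ v, w v * B ^ w v := by
    intro w
    unfold sortedDesc
    rw [List.map_reverse, List.sum_reverse, ← Multiset.sum_coe, ← Multiset.map_coe,
      Multiset.sort_eq, Multiset.map_map]
    rfl
  have hlen : ∀ w : M → ℕ, (sortedDesc w).length = Fintype.card M := by
    intro w
    simp [sortedDesc]
  refine lex_of_weight_lt B _ _ (by rw [hlen, hlen]) (by rwa [hlen]) ?_ (by rwa [hsum, hsum])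
  unfold sortedDesc
  rw [List.pairwise_reverse]
  exact Multiset.pairwise_sort _ _

/-- Moving one unit from `i` to `t` with `x t + 1 < x i` makes the sorted list smaller. -/
lemma transfer_lex {M : Type*} [Fintype M] [DecidableEq M] (z x : M → ℕ) {i t : M} (hit : i ≠ t)
    (hz : ∀ v, (z v : ℤ) = x v + (if v = t then 1 else 0) - (if v = i then 1 else 0))
    (h : x t + 1 < x i) : List.Lex (· < ·) (sortedDesc z) (sortedDesc x) := by
  refine sortedDesc_lex z x (Fintype.card M + 2) (by omega) ?_
  set B := Fintype.card M + 2 with hBdef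
  have hzt : z t = x t + 1 := by have := hz t; simp [hit.symm] at this; omega
  have hzi : z i + 1 = x i := by have := hz i; simp [hit] at this; omega
  have hzo : ∀ v, v ≠ i → v ≠ t → z v = x v := by
    intro v h1 h2; have := hz v; simp [h1, h2] at this; omega
  have ht : t ∈ (Finset.univ : Finset M).erase i := by simp [hit.symm]
  rw [← Finset.add_sum_erase _ _ (Finset.mem_univ i), ← Finset.add_sum_erase _ _ ht,
    ← Finset.add_sum_erase _ (fun v => x v * B ^ x v) (Finset.mem_univ i),
    ← Finset.add_sum_erase _ (fun v => x v * B ^ x v) ht]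
  have hrest : ∑ v ∈ ((Finset.univ : Finset M).erase i).erase t, z v * B ^ z v
      = ∑ v ∈ ((Finset.univ : Finset M).erase i).erase t, x v * B ^ x v := by
    refine Finset.sum_congr rfl fun v hv => ?_
    simp at hv
    rw [hzo v hv.2 hv.1]
  rw [hrest, hzt, ← hzi]
  have h1 : (x t + 1) * B ^ (x t + 1) ≤ z i * B ^ z i :=
    Nat.mul_le_mul (by omega) (Nat.pow_le_pow_right (by omega) (by omega))
  have h2 : 2 * (z i * B ^ z i) ≤ z i * B ^ (z i + 1) := by
    calc 2 * (z i * B ^ z i) ≤ B * (z i * B ^ z i) := Nat.mul_le_mul_right _ (by omega)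
      _ = _ := by ring
  have h3 : z i * B ^ (z i + 1) < (z i + 1) * B ^ (z i + 1) :=
    Nat.mul_lt_mul_of_pos_right (by omega) (by positivity)
  omega

lemma transfer_eq {M : Type*} [Fintype M] [DecidableEq M] (z x : M → ℕ) {i t : M} (hit : i ≠ t)
    (hz : ∀ v, (z v : ℤ) = x v + (if v = t then 1 else 0) - (if v = i then 1 else 0))
    (h : x t + 1 = x i) : sortedDesc z = sortedDesc x := by
  have hcomp : z = x ∘ Equiv.swap i t := by
    funext v
    have := hz v
    by_cases h1 : v = i
    · subst h1; simp [hit] at this; simp; omega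
    · by_cases h2 : v = t
      · subst h2; simp [h1] at this; simp; omega
      · simp [h1, h2] at this
        simp [Equiv.swap_apply_of_ne_of_ne h1 h2, this]
  unfold sortedDesc
  rw [hcomp, ← Multiset.map_map, Multiset.map_univ_val_equiv]

/-! ### Assignments and trails -/

/-- The allocation in which each agent `j` sits on the resource `γ j`. -/
def alloc {N M : Type*} [Fintype N] [DecidableEq M] (γ : N → M) (v : M) : Finset N :=
  Finset.univ.filter fun j => γ j = v

@[simp] lemma mem_alloc (γ : N → M) (v : M) (j : N) : j ∈ alloc γ v ↔ γ j = v := by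
  simp [alloc]

lemma isAllocation_alloc (γ : N → M) : IsAllocation (alloc γ) := by
  refine ⟨fun i₁ i₂ h => ?_, fun j => ⟨γ j, by simp⟩⟩
  rw [Finset.disjoint_left]
  intro j h1 h2
  rw [mem_alloc] at h1 h2
  exact h (h1.symm.trans h2)

lemma exists_alloc {a : M → Finset N} (ha : IsAllocation a) : ∃ γ : N → M, a = alloc γ := by
  choose γ hγ using ha.2
  refine ⟨γ, funext fun v => Finset.ext fun j => ?_⟩
  rw [mem_alloc]
  refine ⟨fun hj => ?_, fun hj => hj ▸ hγ j⟩
  by_contra hne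
  exact Finset.disjoint_left.mp (ha.1 _ _ hne) (hγ j) hj

lemma card_inter_alloc (D : Finset N) (γ : N → M) (v : M) :
    ((D ∩ alloc γ v).card : ℤ) = ∑ j ∈ D, if γ j = v then 1 else 0 := by
  rw [Finset.sum_boole]
  congr 2
  ext j
  simp

lemma sum_card_inter_alloc (D : Finset N) (γ : N → M) (h : M → ℤ) :
    ∑ v, ((D ∩ alloc γ v).card : ℤ) * h v = ∑ j ∈ D, h (γ j) := by
  simp_rw [card_inter_alloc, Finset.sum_mul]
  rw [Finset.sum_comm]
  refine Finset.sum_congr rfl fun j _ => ?_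
  simp

/-- `Trail c α β i v S`: the members of `S ⊆ c`, each regarded as an edge from `α j` to `β j`, can be
ordered into a trail (a walk without repeated edges) from `i` to `v`. -/
inductive Trail (c : Finset N) (α β : N → M) (i : M) : M → Finset N → Prop
  | nil : Trail c α β i i ∅
  | snoc {v : M} {S : Finset N} {j : N} : Trail c α β i v S → j ∈ c → α j = v → j ∉ S →
      Trail c α β i (β j) (insert j S)

lemma Trail.subset {c : Finset N} {α β : N → M} {i v : M} {S : Finset N}
    (h : Trail c α β i v S) : S ⊆ c := by
  induction h with
  | nil => simp
  | snoc _ hj _ _ ih => exact Finset.insert_subset hj ih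

/-- Truncating a trail right after the edge `j`. -/
lemma Trail.truncate {c : Finset N} {α β : N → M} {i v : M} {S : Finset N}
    (h : Trail c α β i v S) {j : N} (hj : j ∈ S) : ∃ S', Trail c α β i (β j) S' := by
  induction h with
  | nil => simp at hj
  | snoc h' hjc hα hjS ih =>
    rcases Finset.mem_insert.mp hj with rfl | hj
    · exact ⟨_, h'.snoc hjc hα hjS⟩
    · exact ih hj

lemma Trail.extend {c : Finset N} {α β : N → M} {i : M} {S : Finset N} {j : N}
    (h : Trail c α β i (α j) S) (hj : j ∈ c) : ∃ S', Trail c α β i (β j) S' := by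
  by_cases hjS : j ∈ S
  · exact h.truncate hjS
  · exact ⟨_, h.snoc hj rfl hjS⟩

/-- In-degree minus out-degree along a trail. -/
lemma Trail.net {c : Finset N} {α β : N → M} {i t : M} {S : Finset N}
    (h : Trail c α β i t S) (v : M) :
    ∑ j ∈ S, ((if β j = v then (1 : ℤ) else 0) - (if α j = v then 1 else 0))
      = (if v = t then 1 else 0) - (if v = i then 1 else 0) := by
  induction h with
  | nil => simp
  | snoc h' hjc hα hjS ih =>
    rw [Finset.sum_insert hjS, ih, hα]
    simp only [eq_comm (a := v)]
    ring

/-- Effect on the counts of moving the agents of a trail to their new resources. -/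
lemma Trail.card_piecewise {c : Finset N} {α β : N → M} {i t : M} {S : Finset N}
    (h : Trail c α β i t S) {D : Finset N} (hD : S ⊆ D) (v : M) :
    ((D ∩ alloc (S.piecewise β α) v).card : ℤ)
      = (D ∩ alloc α v).card + (if v = t then 1 else 0) - (if v = i then 1 else 0) := by
  rw [add_sub_assoc, ← h.net v, ← sub_eq_iff_eq_add', card_inter_alloc, card_inter_alloc,
    ← Finset.sum_sub_distrib]
  symm
  rw [← Finset.sum_subset hD]
  · refine Finset.sum_congr rfl fun j hj => ?_
    simp [hj]
  · intro j _ hj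
    simp [hj]

/-! ### Consequences of maximality -/

lemma feasible_piecewise {f : M → Finset N} {α β : N → M} (hα : Feasible f (alloc α))
    (hβ : Feasible f (alloc β)) (S : Finset N) : Feasible f (alloc (S.piecewise β α)) := by
  intro v j hj
  rw [mem_alloc] at hj
  by_cases hS : j ∈ S
  · rw [Finset.piecewise_eq_of_mem _ _ _ hS] at hj
    exact hβ v (by simpa using hj)
  · rw [Finset.piecewise_eq_of_notMem _ _ _ hS] at hj
    exact hα v (by simpa using hj)

/-- The ends of a trail of `c`-moves in a maximal allocation: shifting along the trail must not
improve the kernel, nor, when the kernel is unchanged, the `c`-kernel. -/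
lemma trail_bounds {f : M → Finset N} {C : Set (Finset N)} (hC : IsPartitionStructure C)
    {α β : N → M} (hα : Feasible f (alloc α)) (hβ : Feasible f (alloc β))
    (hmax : ∀ abar : M → Finset N, IsAllocation abar → Feasible f abar →
      ¬ BalanceDominates C abar (alloc α))
    {c : Finset N} {i t : M} {S : Finset N} (h : Trail c α β i t S) (hit : i ≠ t) :
    (alloc α i).card ≤ (alloc α t).card + 1 ∧
    (c ∈ C → (alloc α i).card = (alloc α t).card + 1 →
      (c ∩ alloc α i).card ≤ (c ∩ alloc α t).card + 1) := by
  have hno := hmax _ (isAllocation_alloc (S.piecewise β α)) (feasible_piecewise hα hβ S)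
  have hx : ∀ v, ((alloc (S.piecewise β α) v).card : ℤ)
      = (alloc α v).card + (if v = t then 1 else 0) - (if v = i then 1 else 0) := by
    intro v
    simpa using h.card_piecewise (Finset.subset_univ S) v
  refine ⟨?_, fun hc heq => ?_⟩
  · by_contra hlt
    exact hno (Or.inl (transfer_lex _ _ hit hx (by omega)))
  · by_contra hlt
    have hk : kernel (alloc (S.piecewise β α)) = kernel (alloc α) :=
      transfer_eq _ _ hit hx heq.symm
    have hck : List.Lex (· < ·) (ckernel c (alloc (S.piecewise β α))) (ckernel c (alloc α)) :=
      transfer_lex _ _ hit (h.card_piecewise h.subset) (by omega)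
    refine hno (Or.inr ⟨hk, fun c' hc' => ?_, c, hc, hck⟩)
    by_cases hcc : c' = c
    · subst hcc; exact Or.inr hck
    · left
      have hset : ∀ v, c' ∩ alloc (S.piecewise β α) v = c' ∩ alloc α v := by
        intro v
        ext j
        simp only [Finset.mem_inter, mem_alloc]
        refine and_congr_right fun hj => ?_
        have : j ∉ S := fun hS =>
          Finset.disjoint_left.mp (hC.2.1 c' hc' c hc hcc) hj (h.subset hS)
        rw [Finset.piecewise_eq_of_notMem _ _ _ this]
      unfold ckernel
      simp_rw [hset]

/-! ### Numerical estimates -/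

/-- The quantity `P i` of a resource `i` is at most the increase of `q t * T ^ x t` at a resource `t`
that gains one coalition member, provided `i` and `t` satisfy the conclusion of `trail_bounds`. -/
lemma pair_bound {T : ℤ} (hT : 2 ≤ T) {qi xi qt xt : ℕ} (hqT : (qi : ℤ) ≤ T)
    (hx : xi ≤ xt + 1) (hq : xi = xt + 1 → qi ≤ qt + 1) :
    (qi : ℤ) * T ^ xi - (qi - 1) * T ^ (xi - 1) ≤ (qt + 1) * T ^ (xt + 1) - qt * T ^ xt := by
  have hpow : T ^ xt ≤ T ^ (xt + 1) := pow_le_pow_right₀ (by omega) (by omega)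
  have hpos : ∀ k : ℕ, 0 < T ^ k := fun k => by positivity
  have hqt : 0 ≤ (qt : ℤ) * (T ^ (xt + 1) - T ^ xt) :=
    mul_nonneg (by positivity) (by omega)
  rcases Nat.lt_or_ge xt xi with hlt | hle
  · obtain rfl : xi = xt + 1 := by omega
    have := hq rfl
    have hm : ((qi : ℤ) - 1) * (T ^ (xt + 1) - T ^ xt) ≤ qt * (T ^ (xt + 1) - T ^ xt) :=
      mul_le_mul_of_nonneg_right (by omega) (by omega)
    rw [Nat.add_sub_cancel]
    linarith
  · rcases Nat.eq_zero_or_pos qi with h0 | h0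
    · subst h0
      have : T ^ (xi - 1) ≤ T ^ xt := pow_le_pow_right₀ (by omega) (by omega)
      push_cast
      linarith
    · have h1 : 0 ≤ ((qi : ℤ) - 1) * T ^ (xi - 1) := mul_nonneg (by omega) (hpos _).le
      have h2 : (qi : ℤ) * T ^ xi ≤ T * T ^ xt :=
        mul_le_mul hqT (pow_le_pow_right₀ (by omega) hle) (hpos _).le (by omega)
      have h3 : T * T ^ xt = T ^ (xt + 1) := by ring
      linarith

/-- The contribution of a single resource, of load `x` before and `y` after the deviation, with `q`
and `r` coalition members respectively. -/
lemma vertex_bound {T g : ℤ} (hT : 2 ≤ T) {q x r y : ℕ} (hqx : q ≤ x)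
    (hd : (y : ℤ) - x = r - q) (hy : y ≤ x + 1)
    (hsink : y = x + 1 → g ≤ (q + 1) * T ^ (x + 1) - q * T ^ x)
    (hsource : (q : ℤ) * T ^ x - (q - 1) * T ^ (x - 1) ≤ g) :
    (q : ℤ) * T ^ x - r * T ^ y ≤ q * g - r * g := by
  rcases lt_trichotomy y x with hlt | heq | hgt
  · obtain ⟨k, rfl⟩ : ∃ k, q = r + (k + 1) := ⟨q - r - 1, by omega⟩
    obtain rfl : x = y + (k + 1) := by omega
    have hgoal : (((r + (k + 1) : ℕ) : ℤ)) * g - r * g = (k + 1) * g := by push_cast; ring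
    rw [hgoal]
    have hmul := mul_le_mul_of_nonneg_left hsource (show (0 : ℤ) ≤ (k : ℤ) + 1 by positivity)
    refine le_trans ?_ hmul
    rcases Nat.eq_zero_or_pos k with h0 | h0
    · subst h0
      simp
    · -- the load drops by `k + 1 ≥ 2`
      have e : T ^ (y + (k + 1)) = T * T ^ (y + k) := by ring
      have e' : y + (k + 1) - 1 = y + k := by omega
      rw [e', e]
      push_cast
      have hW : 0 < T ^ (y + k) := by positivity
      have hr : 0 ≤ (r : ℤ) * T ^ y := by positivity
      have hk : (1 : ℤ) ≤ k := by exact_mod_cast h0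
      have key : 0 ≤ (k : ℤ) * (r + (k + 1)) * T - (k + 1) * (r + k) := by
        have h1 : (k : ℤ) * (r + (k + 1)) * 2 ≤ (k : ℤ) * (r + (k + 1)) * T :=
          mul_le_mul_of_nonneg_left hT (by positivity)
        have h2 : (0 : ℤ) ≤ (k - 1) * r := mul_nonneg (by omega) (by positivity)
        nlinarith
      nlinarith [mul_nonneg key hW.le]
  · subst heq
    obtain rfl : r = q := by omega
    simp
  · obtain rfl : y = x + 1 := by omega
    obtain rfl : r = q + 1 := by omega
    have := hsink rfl
    push_cast
    linarith

/-! ### Stability -/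

lemma not_blocksVia_coalition {f : M → Finset N} {C : Set (Finset N)}
    (hC : IsPartitionStructure C)
    {α β : N → M} (hα : Feasible f (alloc α))
    (hmax : ∀ abar : M → Finset N, IsAllocation abar → Feasible f abar →
      ¬ BalanceDominates C abar (alloc α))
    {c : Finset N} (hc : c ∈ C) : ¬ BlocksVia f c (alloc α) (alloc β) := by
  rintro ⟨-, hβ, hsame, hweak, j₀, hj₀, i₁, i₂, h1, h2, hstrict⟩
  rw [mem_alloc] at h1 h2
  subst h1 h2
  have hweak' : ∀ j ∈ c, (alloc β (β j)).card ≤ (alloc α (α j)).card :=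
    fun j hj => hweak j hj _ _ (by simp) (by simp)
  have hd : ∀ v, ((alloc β v).card : ℤ) - (alloc α v).card
      = (c ∩ alloc β v).card - (c ∩ alloc α v).card := by
    intro v
    have e1 := Finset.card_sdiff_add_card_inter (alloc α v) c
    have e2 := Finset.card_sdiff_add_card_inter (alloc β v) c
    rw [Finset.inter_comm] at e1 e2
    rw [hsame v] at e1
    omega
  -- a resource whose load grows receives a member of `c` from a resource it can be compared with
  have hy : ∀ v, (alloc β v).card ≤ (alloc α v).card + 1 := by
    intro v
    by_contra hlt
    have hpos : 0 < (c ∩ alloc β v).card := by have := hd v; omega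
    obtain ⟨j, hj⟩ := Finset.card_pos.mp hpos
    rw [Finset.mem_inter, mem_alloc] at hj
    obtain ⟨hjc, rfl⟩ := hj
    have hw := hweak' j hjc
    have hne : α j ≠ β j := by
      intro he
      rw [he] at hw
      omega
    have := (trail_bounds hC hα hβ hmax (Trail.nil.snoc hjc rfl (by simp)) hne).1
    omega
  set T : ℤ := Fintype.card N + 2 with hTdef
  have hT : 2 ≤ T := by omega
  classical
  let P : M → ℤ := fun i => ((c ∩ alloc α i).card : ℤ) * T ^ (alloc α i).card
    - ((c ∩ alloc α i).card - 1) * T ^ ((alloc α i).card - 1)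
  let R : M → Finset M := fun v => Finset.univ.filter fun i => ∃ S, Trail c α β i v S
  have hR : ∀ v, v ∈ R v := fun v => by simpa [R] using ⟨∅, Trail.nil⟩
  let g : M → ℤ := fun v => (R v).sup' ⟨v, hR v⟩ P
  have hmono : ∀ j ∈ c, g (α j) ≤ g (β j) := by
    intro j hj
    refine Finset.sup'_mono _ ?_ _
    intro i hi
    simp only [R, Finset.mem_filter, Finset.mem_univ, true_and] at hi ⊢
    obtain ⟨S, hS⟩ := hi
    exact hS.extend hj
  have hsource : ∀ v, P v ≤ g v := fun v => Finset.le_sup' P (hR v)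
  have hsink : ∀ v, g v ≤ ((c ∩ alloc α v).card + 1) * T ^ ((alloc α v).card + 1)
      - (c ∩ alloc α v).card * T ^ (alloc α v).card := by
    intro v
    refine Finset.sup'_le _ _ fun i hi => ?_
    simp only [R, Finset.mem_filter, Finset.mem_univ, true_and] at hi
    obtain ⟨S, hS⟩ := hi
    have hqT : ((c ∩ alloc α i).card : ℤ) ≤ T := by
      have := Finset.card_le_univ (c ∩ alloc α i)
      omega
    by_cases hiv : i = v
    · subst hiv
      exact pair_bound hT hqT (by omega) (by omega)
    · have hb := trail_bounds hC hα hβ hmax hS hiv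
      exact pair_bound hT hqT hb.1 (hb.2 hc)
  have hvertex : ∀ v, ((c ∩ alloc α v).card : ℤ) * T ^ (alloc α v).card
      - (c ∩ alloc β v).card * T ^ (alloc β v).card
      ≤ (c ∩ alloc α v).card * g v - (c ∩ alloc β v).card * g v := fun v =>
    vertex_bound hT (Finset.card_le_card Finset.inter_subset_right) (hd v) (hy v)
      (fun _ => hsink v) (hsource v)
  have hsum := Finset.sum_le_sum fun v (_ : v ∈ (Finset.univ : Finset M)) => hvertex v
  rw [Finset.sum_sub_distrib, Finset.sum_sub_distrib,
    sum_card_inter_alloc c α (fun v => T ^ (alloc α v).card),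
    sum_card_inter_alloc c β (fun v => T ^ (alloc β v).card),
    sum_card_inter_alloc, sum_card_inter_alloc] at hsum
  have hg : ∑ j ∈ c, g (α j) ≤ ∑ j ∈ c, g (β j) := Finset.sum_le_sum hmono
  have hlt : ∑ j ∈ c, T ^ (alloc β (β j)).card < ∑ j ∈ c, T ^ (alloc α (α j)).card :=
    Finset.sum_lt_sum (fun j hj => pow_le_pow_right₀ (by omega) (hweak' j hj))
      ⟨j₀, hj₀, pow_lt_pow_right₀ (by omega) hstrict⟩
  linarith

lemma not_blocksVia_univ {f : M → Finset N} {C : Set (Finset N)} {α β : N → M}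
    (hmax : ∀ abar : M → Finset N, IsAllocation abar → Feasible f abar →
      ¬ BalanceDominates C abar (alloc α)) :
    ¬ BlocksVia f Finset.univ (alloc α) (alloc β) := by
  rintro ⟨hall, hβ, -, hweak, j₀, -, i₁, i₂, h1, h2, hstrict⟩
  rw [mem_alloc] at h1 h2
  subst h1 h2
  refine hmax _ hall hβ (Or.inl (sortedDesc_lex _ _ (Fintype.card M + 2) (by omega) ?_))
  have hα := sum_card_inter_alloc Finset.univ α
    (fun v => ((Fintype.card M + 2 : ℕ) : ℤ) ^ (alloc α v).card)
  have hβ' := sum_card_inter_alloc Finset.univ β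
    (fun v => ((Fintype.card M + 2 : ℕ) : ℤ) ^ (alloc β v).card)
  simp only [Finset.univ_inter] at hα hβ'
  zify
  push_cast at hα hβ' ⊢
  rw [hα, hβ']
  exact Finset.sum_lt_sum
    (fun j hj => pow_le_pow_right₀ (by omega) (hweak j hj _ _ (by simp) (by simp)))
    ⟨j₀, Finset.mem_univ _, pow_lt_pow_right₀ (by omega) hstrict⟩

lemma not_blocksVia_singleton {f : M → Finset N} {C : Set (Finset N)}
    (hC : IsPartitionStructure C)
    {α β : N → M} (hα : Feasible f (alloc α))
    (hmax : ∀ abar : M → Finset N, IsAllocation abar → Feasible f abar →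
      ¬ BalanceDominates C abar (alloc α))
    (j : N) : ¬ BlocksVia f {j} (alloc α) (alloc β) := by
  rintro ⟨-, hβ, hsame, -, j₀, hj₀, i₁, i₂, h1, h2, hstrict⟩
  rw [mem_alloc] at h1 h2
  subst h1 h2
  rw [Finset.mem_singleton] at hj₀
  subst hj₀
  have e1 := Finset.card_sdiff_add_card_inter (alloc α (β j₀)) {j₀}
  have e2 := Finset.card_sdiff_add_card_inter (alloc β (β j₀)) {j₀}
  rw [hsame] at e1
  have e3 : (alloc β (β j₀) ∩ {j₀}) = {j₀} := by ext k; simp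
  rw [e3, Finset.card_singleton] at e2
  by_cases hne : α j₀ = β j₀
  · have e4 : (alloc α (β j₀) ∩ {j₀}) = {j₀} := by ext k; simp; rintro rfl; exact hne
    rw [e4, Finset.card_singleton] at e1
    rw [hne] at hstrict
    omega
  · have e4 : (alloc α (β j₀) ∩ {j₀}) = ∅ := by
      ext k
      simp only [Finset.mem_inter, mem_alloc, Finset.mem_singleton, Finset.notMem_empty, iff_false]
      rintro ⟨h, rfl⟩
      exact hne h
    rw [e4, Finset.card_empty] at e1
    have := (trail_bounds (c := {j₀}) hC hα hβ hmax
      (Trail.nil.snoc (Finset.mem_singleton_self j₀) rfl (by simp)) hne).1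
    omega

/-- Every feasible allocation maximal w.r.t. the `C`-balance dominance relation is a Nash
equilibrium, Pareto efficient, and `C`-stable. -/
theorem maximal_is_nash_pareto_partition_stable
    {N M : Type*} [Fintype N] [DecidableEq N] [Fintype M] [DecidableEq M]
    [Nonempty N] [Nonempty M]
    (f : M → Finset N) (hf : ∀ j : N, ∃ i : M, j ∈ f i)
    (C : Set (Finset N)) (hC : IsPartitionStructure C)
    (a : M → Finset N) (ha : IsAllocation a) (haf : Feasible f a)
    (hmax : ∀ abar : M → Finset N, IsAllocation abar → Feasible f abar →
      ¬ BalanceDominates C abar a) :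
    (∀ j : N, ¬ Blocks f {j} a) ∧
    (¬ Blocks f Finset.univ a) ∧
    (∀ c ∈ C, ¬ Blocks f c a) := by
  obtain ⟨α, rfl⟩ := exists_alloc ha
  have key : ∀ c : Finset N, (∀ β : N → M, ¬ BlocksVia f c (alloc α) (alloc β)) →
      ¬ Blocks f c (alloc α) := by
    rintro c h ⟨abar, hb⟩
    obtain ⟨β, rfl⟩ := exists_alloc hb.1
    exact h β hb
  exact ⟨fun j => key _ fun β => not_blocksVia_singleton hC haf hmax j,
    key _ fun β => not_blocksVia_univ hmax,
    fun c hc => key _ fun β => not_blocksVia_coalition hC haf hmax hc⟩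
end

section
/- In any identical singleton congestion game with a partition coalition structure C, every feasible allocation a that is maximal with respect to the C-balance dominance relation is a Nash equilibrium, i.e., no singleton coalition {j} blocks a. -/
/-!
If `{j}` blocks `a` via `abar`, then `j` moves from some resource `i₁` to another resource `i₂`
with `|abar i₂| < |a i₁| = p`, and all other resources keep their agents. After the move both
`i₁` and `i₂` hold fewer than `p` agents, so the number of resources with load `x` is unchanged
for each `x > p`, while the number with load `p` drops. Comparing nonincreasing lists through
these multiplicities (`lex_of_count_lt`), the kernel of `abar` is lexicographically smaller than
that of `a`. Hence `abar` balance dominates `a` already through its first clause, whatever the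
coalition structure, contradicting maximality.
-/

variable {N M : Type*} [Fintype N] [DecidableEq N] [Fintype M] [DecidableEq M]

/-- Among nonincreasing lists, the lexicographic order is decided by the multiplicity of the
largest value whose multiplicities differ. -/
theorem lex_of_count_lt (p : ℕ) : ∀ l l' : List ℕ, l.Pairwise (· ≥ ·) → l'.Pairwise (· ≥ ·) →
    l.count p < l'.count p → (∀ x, p < x → l.count x = l'.count x) → List.Lex (· < ·) l l'
  | _, [], _, _, h, _ => by simp at h
  | [], _ :: _, _, _, _, _ => List.Lex.nil
  | x :: xs, y :: ys, hl, hl', h, hx => by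
    have hbig : ∀ z, y < z → (y :: ys).count z = 0 := by
      intro z hz
      rw [List.count_eq_zero]
      intro hmem
      rcases List.mem_cons.1 hmem with rfl | hmem
      · exact lt_irrefl _ hz
      · exact absurd ((List.pairwise_cons.1 hl').1 z hmem) (not_le.2 hz)
    rcases lt_trichotomy x y with hxy | rfl | hxy
    · exact List.Lex.rel hxy
    · refine List.Lex.cons (lex_of_count_lt p xs ys (List.pairwise_cons.1 hl).2
        (List.pairwise_cons.1 hl').2 ?_ ?_)
      · simp only [List.count_cons] at h
        omega
      · intro z hz
        have := hx z hz
        simp only [List.count_cons] at this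
        omega
    · exfalso
      by_cases hpx : p < x
      · have h1 := hx x hpx
        rw [hbig x hxy, List.count_cons_self] at h1
        omega
      · rw [hbig p (by omega)] at h
        omega

theorem kernel_pairwise {N M : Type*} [Fintype M] (a : M → Finset N) :
    (kernel a).Pairwise (· ≥ ·) := by
  unfold kernel
  rw [List.pairwise_reverse]
  exact Multiset.pairwise_sort _ (· ≤ ·)

theorem count_kernel {N M : Type*} [Fintype M] (a : M → Finset N) (x : ℕ) :
    (kernel a).count x = (Finset.univ.filter fun i : M => x = (a i).card).card := by
  unfold kernel
  rw [List.count_reverse, ← Multiset.coe_count, Multiset.sort_eq, Multiset.count_map]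
  rfl

/-- Every feasible allocation maximal w.r.t. `C`-balance dominance is a Nash equilibrium. -/
theorem maximal_is_nash
    {N M : Type*} [Fintype N] [DecidableEq N] [Fintype M] [DecidableEq M]
    [Nonempty N] [Nonempty M]
    (f : M → Finset N) (hf : ∀ j : N, ∃ i : M, j ∈ f i)
    (C : Set (Finset N)) (hC : IsPartitionStructure C)
    (a : M → Finset N) (ha : IsAllocation a) (haf : Feasible f a)
    (hmax : ∀ abar : M → Finset N, IsAllocation abar → Feasible f abar →
      ¬ BalanceDominates C abar a) :
    ∀ j : N, ¬ Blocks f {j} a := by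
  rintro j ⟨b, hb, hbf, hsd, -, j', hj', i₁, i₂, h1, h2, hlt⟩
  obtain rfl : j' = j := Finset.mem_singleton.1 hj'
  have hkeep : ∀ i k, k ≠ j' → (k ∈ a i ↔ k ∈ b i) := by
    intro i k hk
    have := congrArg (k ∈ ·) (hsd i)
    simpa [hk] using this
  have hne : i₁ ≠ i₂ := by
    rintro rfl
    have : a i₁ = b i₁ := by
      ext k
      by_cases hk : k = j'
      · subst hk
        simp [h1, h2]
      · exact hkeep _ _ hk
    rw [this] at hlt
    exact lt_irrefl _ hlt
  have ha' : ∀ i, j' ∈ a i → i = i₁ := fun i hi => by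
    by_contra h
    exact Finset.disjoint_left.1 (ha.1 i i₁ h) hi h1
  have hb' : ∀ i, j' ∈ b i → i = i₂ := fun i hi => by
    by_contra h
    exact Finset.disjoint_left.1 (hb.1 i i₂ h) hi h2
  have hother : ∀ i, i ≠ i₁ → i ≠ i₂ → b i = a i := by
    intro i hi1 hi2
    ext k
    by_cases hk : k = j'
    · subst hk
      exact ⟨fun h => absurd (hb' i h) hi2, fun h => absurd (ha' i h) hi1⟩
    · exact (hkeep _ _ hk).symm
  have hb1 : (b i₁).card < (a i₁).card := by
    refine Finset.card_lt_card ((Finset.ssubset_iff_of_subset ?_).2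
      ⟨j', h1, fun h => hne (hb' _ h)⟩)
    intro k hk
    exact (hkeep _ _ fun h => hne (hb' _ (h ▸ hk))).2 hk
  have ha2 : (a i₂).card < (a i₁).card := by
    refine lt_of_le_of_lt (Finset.card_le_card ?_) hlt
    intro k hk
    exact (hkeep _ _ fun h => hne (ha' _ (h ▸ hk)).symm).1 hk
  refine hmax b hb hbf (Or.inl (lex_of_count_lt (a i₁).card _ _ (kernel_pairwise b)
    (kernel_pairwise a) ?_ ?_))
  · rw [count_kernel, count_kernel]
    refine Finset.card_lt_card ((Finset.ssubset_iff_of_subset ?_).2 ⟨i₁, by simp, ?_⟩)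
    · intro i hi
      simp only [Finset.mem_filter, Finset.mem_univ, true_and] at hi ⊢
      rw [← hother i (by rintro rfl; omega) (by rintro rfl; omega)]
      exact hi
    · simp only [Finset.mem_filter, Finset.mem_univ, true_and]
      omega
  · intro x hx
    rw [count_kernel, count_kernel]
    congr 1
    ext i
    simp only [Finset.mem_filter, Finset.mem_univ, true_and]
    by_cases hi1 : i = i₁
    · subst hi1
      omega
    · by_cases hi2 : i = i₂
      · subst hi2
        omega
      · rw [hother i hi1 hi2]
end

section
/- In any identical singleton congestion game with a partition coalition structure C, every feasible allocation a that is maximal with respect to the C-balance dominance relation is C-stable, i.e., no coalition c ∈ C blocks a. -/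
/-!
Encode an allocation `a` as an assignment `σ : N → M`, and a blocking allocation `ā` of the
coalition `c` as `τ`. Let `x k`, `y k` be the number of members of `c` on resource `k` before and
after, and `b k` the (unchanged) number of outsiders there. Draw an edge `p → q` whenever some
member of `c` moves from `p` to `q`.

*Path shifting* (`exists_shift`). If `q` is reachable from `p`, moving one agent along each edge of
a shortest path gives a feasible allocation in which `p` loses a member of `c`, `q` gains one, and
all other counts are unchanged. Maximality of `a` therefore forces, for `q ≠ p` reachable from `p`,
`|a p| ≤ |a q| + 1`, and `x p ≤ x q + 1` if `|a p| = |a q| + 1`: otherwise the kernel, respectively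
the `c`-kernel at equal kernel, would decrease (`lex_of_shift`, `map_eq_of_shift`).

*A convex potential.* Fix `K > |N|` and put `H z = ∑ k, z k * K ^ (z k + b k)`. Each summand is
convex in `z k`, and since `K` is large the constraints above imply that the marginal gain
of adding an agent at `q` is at least the marginal loss of removing one at `p`, whenever `q` is
reachable from `p` (`marginal_le`). Let `π p` be the least marginal gain among the resources
reachable from `p`. Then `π p` is a subgradient of the `p`-th summand at `x p`, and `π` is monotone
along edges, so `H y - H x ≥ ∑ k, π k * (y k - x k) = ∑ j ∈ c, (π (τ j) - π (σ j)) ≥ 0`.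
On the other hand `H x = ∑ j ∈ c, K ^ |a (σ j)|` and `H y = ∑ j ∈ c, K ^ |ā (τ j)|`, and blocking
makes the second sum strictly smaller.
-/

variable {N M : Type*} [Fintype N] [DecidableEq N] [Fintype M] [DecidableEq M]

/-! ### Sorted lists and one-unit transfers -/

/-- For nonincreasing lists, lexicographic comparison is decided by the multiplicity of the largest
value on which the multiplicities differ. -/
lemma lex_of_count (t : ℕ) : ∀ l' l : List ℕ, l'.Pairwise (· ≥ ·) → l.Pairwise (· ≥ ·) →
    (∀ s, t < s → l'.count s = l.count s) → l'.count t < l.count t →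
    List.Lex (· < ·) l' l := by
  intro l'
  induction l' with
  | nil =>
    intro l _ _ _ h
    cases l with
    | nil => simp at h
    | cons y ys => exact List.Lex.nil
  | cons u us ih =>
    intro l hl' hl hs ht
    cases l with
    | nil => simp at ht
    | cons y ys =>
      rw [List.pairwise_cons] at hl' hl
      rcases lt_trichotomy u y with h | h | h
      · exact List.Lex.rel h
      · subst h
        refine List.Lex.cons (ih ys hl'.2 hl.2 ?_ ?_)
        · intro s hts
          have := hs s hts
          simp only [List.count_cons] at this
          omega
        · simp only [List.count_cons] at ht
          omega
      · exfalso
        have hz : ∀ s, u ≤ s → (y :: ys).count s = 0 := by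
          intro s hus
          rw [List.count_eq_zero]
          intro hm
          rcases List.mem_cons.1 hm with h1 | h1
          · omega
          · have := hl.1 s h1
            omega
        rcases lt_or_ge t u with h1 | h1
        · have h2 := hs u h1
          rw [hz u le_rfl] at h2
          simp at h2
        · rw [hz t h1] at ht
          omega

lemma pairwise_sort_reverse (A : Multiset ℕ) :
    ((A.sort (· ≤ ·)).reverse).Pairwise (· ≥ ·) := by
  rw [List.pairwise_reverse]
  exact A.pairwise_sort (· ≤ ·)

lemma count_sort_reverse (A : Multiset ℕ) (s : ℕ) :
    ((A.sort (· ≤ ·)).reverse).count s = A.count s := by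
  rw [List.count_reverse, ← Multiset.coe_count, Multiset.sort_eq]

lemma map_univ_eq {M : Type*} [Fintype M] [DecidableEq M] {p q : M} (hpq : p ≠ q) (g : M → ℕ) :
    (Finset.univ.val.map g) =
      g p ::ₘ g q ::ₘ (((Finset.univ.erase p).erase q).val.map g) := by
  have h1 : (Finset.univ : Finset M).val = p ::ₘ q ::ₘ ((Finset.univ.erase p).erase q).val := by
    rw [← Finset.insert_val_of_notMem (by simp), Finset.insert_erase (by simp [hpq.symm]),
      ← Finset.insert_val_of_notMem (by simp), Finset.insert_erase (by simp)]
  rw [h1]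
  simp

/-- Transferring one unit from `p` to `q` strictly decreases the nonincreasing rearrangement if
`p` exceeds `q` by at least two. -/
lemma lex_of_shift {M : Type*} [Fintype M] [DecidableEq M] {p q : M} (hpq : p ≠ q) (g g' : M → ℕ)
    (hp : g' p + 1 = g p) (hq : g' q = g q + 1) (ho : ∀ m, m ≠ p → m ≠ q → g' m = g m)
    (hlt : g q + 1 < g p) :
    List.Lex (· < ·) (((Finset.univ.val.map g').sort (· ≤ ·)).reverse)
      (((Finset.univ.val.map g).sort (· ≤ ·)).reverse) := by
  have hR : ((Finset.univ.erase p).erase q).val.map g' =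
      ((Finset.univ.erase p).erase q).val.map g := by
    refine Multiset.map_congr rfl fun m hm => ?_
    have hm' : m ∈ ((Finset.univ.erase p).erase q) := hm
    simp only [Finset.mem_erase] at hm'
    exact ho m hm'.2.1 hm'.1
  refine lex_of_count (g p) _ _ (pairwise_sort_reverse _) (pairwise_sort_reverse _) ?_ ?_
  · intro s hs
    rw [count_sort_reverse, count_sort_reverse, map_univ_eq hpq g, map_univ_eq hpq g', hR]
    simp only [Multiset.count_cons]
    split_ifs <;> omega
  · rw [count_sort_reverse, count_sort_reverse, map_univ_eq hpq g, map_univ_eq hpq g', hR]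
    simp only [Multiset.count_cons]
    split_ifs <;> omega

/-- Transferring one unit from `p` to `q` permutes the values if `p` exceeds `q` by one. -/
lemma map_eq_of_shift {M : Type*} [Fintype M] [DecidableEq M] {p q : M} (hpq : p ≠ q)
    (g g' : M → ℕ)
    (hp : g' p + 1 = g p) (hq : g' q = g q + 1) (ho : ∀ m, m ≠ p → m ≠ q → g' m = g m)
    (heq : g q + 1 = g p) :
    Finset.univ.val.map g' = Finset.univ.val.map g := by
  have hR : ((Finset.univ.erase p).erase q).val.map g' =
      ((Finset.univ.erase p).erase q).val.map g := by
    refine Multiset.map_congr rfl fun m hm => ?_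
    have hm' : m ∈ ((Finset.univ.erase p).erase q) := hm
    simp only [Finset.mem_erase] at hm'
    exact ho m hm'.2.1 hm'.1
  rw [map_univ_eq hpq g, map_univ_eq hpq g', hR, hq, heq, Multiset.cons_swap]
  congr 2
  omega

/-! ### Shifting agents along shortest paths -/

/-- `WalkLen r i n k`: there is an `r`-walk of length `n` from `i` to `k`. -/
def WalkLen {M : Type*} (r : M → M → Prop) (i : M) : ℕ → M → Prop
  | 0, k => k = i
  | n + 1, k => ∃ p, WalkLen r i n p ∧ r p k

lemma exists_walkLen {M : Type*} {r : M → M → Prop} {i k : M} (h : Relation.ReflTransGen r i k) :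
    ∃ n, WalkLen r i n k := by
  induction h with
  | refl => exact ⟨0, rfl⟩
  | tail _ h2 ih =>
    obtain ⟨n, hn⟩ := ih
    exact ⟨n + 1, _, hn, h2⟩

lemma card_filter_update {N M : Type*} [DecidableEq N] [DecidableEq M] (S : Finset N) (ρ : N → M)
    {j : N} (hj : j ∈ S) (k m : M) :
    ((S.filter fun j' => Function.update ρ j k j' = m).card : ℤ) =
      (S.filter fun j' => ρ j' = m).card - (if m = ρ j then 1 else 0) + (if m = k then 1 else 0)
      := by
  rw [Finset.card_filter, Finset.card_filter, ← Finset.add_sum_erase S _ hj,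
    ← Finset.add_sum_erase S (fun j' => if ρ j' = m then 1 else 0) hj]
  have : ∑ j' ∈ S.erase j, (if Function.update ρ j k j' = m then 1 else 0) =
      ∑ j' ∈ S.erase j, (if ρ j' = m then 1 else 0) := by
    refine Finset.sum_congr rfl fun j' hj' => ?_
    rw [Function.update_of_ne (Finset.ne_of_mem_erase hj')]
  rw [this, Function.update_self]
  push_cast
  simp only [eq_comm (a := m)]
  ring

/-- Shift one member of `c` along every edge of a shortest walk from `i` to `k`. Every agent moved
starts at distance less than `n` from `i`, which guarantees that the agent used for the next edge
has not been moved yet. -/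
lemma exists_shift_aux {N M : Type*} [DecidableEq N] [DecidableEq M] (c : Finset N) (σ τ : N → M)
    (i : M) (n : ℕ) : ∀ k, WalkLen (fun p q => ∃ j ∈ c, σ j = p ∧ τ j = q) i n k →
    (∀ m < n, ¬ WalkLen (fun p q => ∃ j ∈ c, σ j = p ∧ τ j = q) i m k) →
    ∃ ρ : N → M, (∀ j, ρ j = σ j ∨ ρ j = τ j) ∧ (∀ j, j ∉ c → ρ j = σ j) ∧
      (∀ j, ρ j ≠ σ j → ∃ m < n, WalkLen (fun p q => ∃ j ∈ c, σ j = p ∧ τ j = q) i m (σ j)) ∧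
      ∀ S : Finset N, c ⊆ S → ∀ m, ((S.filter fun j => ρ j = m).card : ℤ) =
        (S.filter fun j => σ j = m).card - (if m = i then 1 else 0) + (if m = k then 1 else 0) := by
  induction n with
  | zero =>
    intro k hk _
    have hk' : k = i := hk
    subst hk'
    exact ⟨σ, fun j => Or.inl rfl, fun _ _ => rfl, fun j h => absurd rfl h, fun S _ m => by ring⟩
  | succ n ih =>
    rintro k ⟨p, hp, j, hj, hjp, hjk⟩ hmin
    have hpmin : ∀ m < n, ¬ WalkLen (fun p q => ∃ j ∈ c, σ j = p ∧ τ j = q) i m p :=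
      fun m hm hw => hmin (m + 1) (by omega) ⟨p, hw, j, hj, hjp, hjk⟩
    obtain ⟨ρ, h1, h2, h3, h4⟩ := ih p hp hpmin
    have hρj : ρ j = p := by
      by_contra hne
      obtain ⟨m, hm, hw⟩ := h3 j (by rw [hjp]; exact hne)
      rw [hjp] at hw
      exact hpmin m hm hw
    refine ⟨Function.update ρ j k, ?_, ?_, ?_, ?_⟩
    · intro j'
      by_cases h : j' = j
      · subst h; right; simp [hjk]
      · rw [Function.update_of_ne h]; exact h1 j'
    · intro j' hj'
      have h : j' ≠ j := fun h => hj' (h ▸ hj)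
      rw [Function.update_of_ne h]; exact h2 j' hj'
    · intro j' hj'
      by_cases h : j' = j
      · subst h; exact ⟨n, by omega, by rw [hjp]; exact hp⟩
      · rw [Function.update_of_ne h] at hj'
        obtain ⟨m, hm, hw⟩ := h3 j' hj'
        exact ⟨m, by omega, hw⟩
    · intro S hS m
      rw [card_filter_update S ρ (hS hj), h4 S hS m, hρj]
      ring

lemma exists_shift_s4 {N M : Type*} [DecidableEq N] [DecidableEq M] (c : Finset N) (σ τ : N → M)
    (i k : M) (h : Relation.ReflTransGen (fun p q => ∃ j ∈ c, σ j = p ∧ τ j = q) i k) :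
    ∃ ρ : N → M, (∀ j, ρ j = σ j ∨ ρ j = τ j) ∧ (∀ j, j ∉ c → ρ j = σ j) ∧
      ∀ S : Finset N, c ⊆ S → ∀ m, ((S.filter fun j => ρ j = m).card : ℤ) =
        (S.filter fun j => σ j = m).card - (if m = i then 1 else 0) + (if m = k then 1 else 0) := by
  classical
  have hex := exists_walkLen h
  obtain ⟨ρ, h1, h2, _, h4⟩ := exists_shift_aux c σ τ i (Nat.find hex) k (Nat.find_spec hex)
    (fun m hm => Nat.find_min hex hm)
  exact ⟨ρ, h1, h2, h4⟩

/-! ### The convex potential -/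

/-- Subgradient inequality for a convex function `h` on `ℕ`. The lower bound on `π` is void at
`x = 0`. -/
lemma subgradient (h : ℕ → ℤ) (hmono : Monotone fun n => h (n + 1) - h n) (x y : ℕ) (π : ℤ)
    (hup : π ≤ h (x + 1) - h x) (hlow : ∀ z, z + 1 = x → h (z + 1) - h z ≤ π) :
    π * ((y : ℤ) - x) ≤ h y - h x := by
  rcases le_total x y with hxy | hxy
  · induction y, hxy using Nat.le_induction with
    | base => simp
    | succ y hxy ih =>
      have h1 : h (x + 1) - h x ≤ h (y + 1) - h y := hmono hxy
      push_cast
      linarith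
  · obtain ⟨d, rfl⟩ := Nat.exists_eq_add_of_le hxy
    have key : ∀ e, e ≤ d → h (y + e) - h y ≤ π * e := by
      intro e
      induction e with
      | zero => simp
      | succ e ih =>
        intro he
        have h1 : h (y + e + 1) - h (y + e) ≤ h (y + d - 1 + 1) - h (y + d - 1) :=
          hmono (by omega)
        have h2 := hlow (y + d - 1) (by omega)
        have h3 := ih (by omega)
        rw [← Nat.add_assoc]
        push_cast
        linarith
    have := key d le_rfl
    push_cast
    linarith

/-- Total potential `z * K ^ (z + b)` of `z` coalition members on a resource with `b` outsiders. -/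
def pot (K b z : ℕ) : ℤ := (z : ℤ) * (K : ℤ) ^ (z + b)

lemma pot_marginal (K b z : ℕ) :
    pot K b (z + 1) - pot K b z = (K : ℤ) ^ (z + b) * ((K - 1) * (z + 1) + 1) := by
  unfold pot
  have : z + 1 + b = (z + b) + 1 := by ring
  rw [this, pow_succ]
  push_cast
  ring

lemma pot_convex (K b : ℕ) (hK : 1 ≤ K) : Monotone fun n => pot K b (n + 1) - pot K b n := by
  have hK' : (1 : ℤ) ≤ K := by exact_mod_cast hK
  intro m n hmn
  simp only [pot_marginal]
  have h2 : (m : ℤ) ≤ n := by exact_mod_cast hmn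
  have h3 : (0 : ℤ) ≤ ((K : ℤ) - 1) * (m + 1) + 1 := by
    have : (0 : ℤ) ≤ ((K : ℤ) - 1) * (m + 1) := mul_nonneg (by linarith) (by positivity)
    linarith
  have h4 : ((K : ℤ) - 1) * (m + 1) + 1 ≤ ((K : ℤ) - 1) * (n + 1) + 1 := by
    have := mul_le_mul_of_nonneg_left h2 (by linarith : (0 : ℤ) ≤ (K : ℤ) - 1)
    linarith
  have h5 : (K : ℤ) ^ (m + b) ≤ (K : ℤ) ^ (n + b) := pow_le_pow_right₀ hK' (by omega)
  exact mul_le_mul h5 h4 h3 (by positivity)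

/-- The marginal loss at a resource with `z + 1` members and `b` outsiders is at most the marginal
gain at one with `z'` members and `b'` outsiders: loads are compared first, membership second. -/
lemma marginal_le_s4 (K b z b' z' : ℕ) (hz : z + 1 ≤ K) (hload : z + b ≤ z' + b')
    (hmem : z + b = z' + b' → z ≤ z') :
    pot K b (z + 1) - pot K b z ≤ pot K b' (z' + 1) - pot K b' z' := by
  rw [pot_marginal, pot_marginal]
  have hK' : (1 : ℤ) ≤ K := by exact_mod_cast (by omega : 1 ≤ K)
  have hz' : (z : ℤ) + 1 ≤ K := by exact_mod_cast hz
  rcases hload.eq_or_lt with h | h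
  · have h2 : (z : ℤ) ≤ z' := by exact_mod_cast hmem h
    rw [h]
    refine mul_le_mul_of_nonneg_left ?_ (by positivity)
    have := mul_le_mul_of_nonneg_left h2 (by linarith : (0 : ℤ) ≤ (K : ℤ) - 1)
    linarith
  · have h5 : (K : ℤ) ^ (z + b + 1) ≤ (K : ℤ) ^ (z' + b') := pow_le_pow_right₀ hK' h
    have h6 : ((K : ℤ) - 1) * (z + 1) + 1 ≤ K * K := by nlinarith
    have h7 : (K : ℤ) ≤ ((K : ℤ) - 1) * (z' + 1) + 1 := by
      have : (0 : ℤ) ≤ ((K : ℤ) - 1) * z' := mul_nonneg (by linarith) (by positivity)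
      linarith
    calc (K : ℤ) ^ (z + b) * (((K : ℤ) - 1) * (z + 1) + 1)
        ≤ (K : ℤ) ^ (z + b) * (K * K) := mul_le_mul_of_nonneg_left h6 (by positivity)
      _ = (K : ℤ) ^ (z + b + 1) * K := by ring
      _ ≤ (K : ℤ) ^ (z' + b') * (((K : ℤ) - 1) * (z' + 1) + 1) :=
        mul_le_mul h5 h7 (by positivity) (by positivity)

lemma sum_comp_eq {N M : Type*} [Fintype M] [DecidableEq M] (c : Finset N) (σ : N → M)
    (w : M → ℤ) :
    ∑ j ∈ c, w (σ j) = ∑ k, ((c.filter fun j => σ j = k).card : ℤ) * w k := by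
  rw [← Finset.sum_fiberwise c σ]
  refine Finset.sum_congr rfl fun k _ => ?_
  rw [Finset.sum_congr rfl (g := fun _ => w k)
    (fun j hj => by rw [(Finset.mem_filter.1 hj).2])]
  simp

/-- If along every path of `c`-moves the loads and membership counts satisfy the inequalities `hopt`
(those that a maximal allocation satisfies), the potential does not decrease from `σ` to `τ`. -/
lemma potential_le {N M : Type*} [Fintype M] [DecidableEq M] (c : Finset N) (σ τ : N → M)
    (b : M → ℕ) (K : ℕ) (hK : c.card ≤ K) (hK1 : 1 ≤ K)
    (hopt : ∀ p q, p ≠ q →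
      Relation.ReflTransGen (fun p q => ∃ j ∈ c, σ j = p ∧ τ j = q) p q →
      (c.filter fun j => σ j = p).card + b p ≤ (c.filter fun j => σ j = q).card + b q + 1 ∧
      ((c.filter fun j => σ j = p).card + b p = (c.filter fun j => σ j = q).card + b q + 1 →
        (c.filter fun j => σ j = p).card ≤ (c.filter fun j => σ j = q).card + 1)) :
    ∑ k, pot K (b k) (c.filter fun j => σ j = k).card ≤
      ∑ k, pot K (b k) (c.filter fun j => τ j = k).card := by
  classical
  set r : M → M → Prop := fun p q => ∃ j ∈ c, σ j = p ∧ τ j = q with hr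
  set x : M → ℕ := fun k => (c.filter fun j => σ j = k).card with hx
  set y : M → ℕ := fun k => (c.filter fun j => τ j = k).card with hy
  set gain : M → ℤ := fun k => pot K (b k) (x k + 1) - pot K (b k) (x k) with hgain
  have hmin : ∀ p, ∃ q, Relation.ReflTransGen r p q ∧
      ∀ q', Relation.ReflTransGen r p q' → gain q ≤ gain q' := by
    intro p
    obtain ⟨q, hq, hq'⟩ := Finset.exists_min_image
      (Finset.univ.filter fun q => Relation.ReflTransGen r p q) gain
      ⟨p, by simpa using Relation.ReflTransGen.refl⟩
    refine ⟨q, by simpa using hq, fun q' h => hq' q' (by simpa using h)⟩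
  choose m hm1 hm2 using hmin
  have hsub : ∀ k, gain (m k) * ((y k : ℤ) - x k) ≤ pot K (b k) (y k) - pot K (b k) (x k) := by
    intro k
    refine subgradient (pot K (b k)) (pot_convex K (b k) hK1) (x k) (y k) _
      (hm2 k k Relation.ReflTransGen.refl) ?_
    intro z hz
    have hzK : z + 1 ≤ K := by
      rw [hz]; exact (Finset.card_filter_le _ _).trans hK
    by_cases hk : k = m k
    · rw [← hk]
      exact pot_convex K (b k) hK1 (by omega : z ≤ x k)
    · obtain ⟨h1, h2⟩ := hopt k (m k) hk (hm1 k)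
      change x k + b k ≤ x (m k) + b (m k) + 1 at h1
      change x k + b k = x (m k) + b (m k) + 1 → x k ≤ x (m k) + 1 at h2
      exact marginal_le_s4 K (b k) z (b (m k)) (x (m k)) hzK (by omega)
        (fun h => by have := h2 (by omega); omega)
  have hnonneg : 0 ≤ ∑ k, gain (m k) * ((y k : ℤ) - x k) := by
    have h1 := sum_comp_eq c σ (fun k => gain (m k))
    have h2 := sum_comp_eq c τ (fun k => gain (m k))
    have h3 : ∑ j ∈ c, gain (m (σ j)) ≤ ∑ j ∈ c, gain (m (τ j)) := by
      refine Finset.sum_le_sum fun j hj => hm2 _ _ ?_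
      exact Relation.ReflTransGen.head ⟨j, hj, rfl, rfl⟩ (hm1 (τ j))
    have h4 : ∑ k, gain (m k) * ((y k : ℤ) - x k) =
        ∑ k, (y k : ℤ) * gain (m k) - ∑ k, (x k : ℤ) * gain (m k) := by
      rw [← Finset.sum_sub_distrib]
      exact Finset.sum_congr rfl fun k _ => by ring
    rw [h4, ← h1, ← h2]
    linarith
  have h5 := Finset.sum_le_sum fun k (_ : k ∈ Finset.univ) => hsub k
  rw [Finset.sum_sub_distrib] at h5
  linarith

/-! ### From maximality to stability -/

/-- An allocation is the family of fibres of a function from agents to resources. -/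
lemma exists_assignment_s4 {N M : Type*} [Fintype N] [DecidableEq N] [DecidableEq M]
    {a : M → Finset N} (ha : IsAllocation a) :
    ∃ σ : N → M, a = fun k => Finset.univ.filter fun j => σ j = k := by
  choose σ hσ using ha.2
  refine ⟨σ, funext fun k => ?_⟩
  ext j
  simp only [Finset.mem_filter, Finset.mem_univ, true_and]
  constructor
  · intro hj
    by_contra hne
    exact Finset.disjoint_left.1 (ha.1 _ _ hne) (hσ j) hj
  · rintro rfl
    exact hσ j

lemma isAllocation_fibres {N M : Type*} [Fintype N] [DecidableEq M] (ρ : N → M) :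
    IsAllocation (fun k => Finset.univ.filter fun j => ρ j = k) := by
  refine ⟨fun p q hpq => Finset.disjoint_left.2 fun j hj hj' => hpq ?_, fun j => ⟨ρ j, by simp⟩⟩
  rw [← (Finset.mem_filter.1 hj).2, ← (Finset.mem_filter.1 hj').2]

/-- Every feasible allocation maximal w.r.t. `C`-balance dominance is `C`-stable. -/
theorem maximal_is_partition_stable
    {N M : Type*} [Fintype N] [DecidableEq N] [Fintype M] [DecidableEq M]
    [Nonempty N] [Nonempty M]
    (f : M → Finset N) (hf : ∀ j : N, ∃ i : M, j ∈ f i)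
    (C : Set (Finset N)) (hC : IsPartitionStructure C)
    (a : M → Finset N) (ha : IsAllocation a) (haf : Feasible f a)
    (hmax : ∀ abar : M → Finset N, IsAllocation abar → Feasible f abar →
      ¬ BalanceDominates C abar a) :
    ∀ c ∈ C, ¬ Blocks f c a := by
  rintro c hc ⟨abar, habar, hbf, hout, hle, j₀, hj₀, p₀, q₀, hp₀, hq₀, hlt⟩
  obtain ⟨σ, rfl⟩ := exists_assignment_s4 ha
  obtain ⟨τ, rfl⟩ := exists_assignment_s4 habar
  have hsplit : ∀ (ρ : N → M) k, (Finset.univ.filter fun j => ρ j = k).card =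
      (c.filter fun j => ρ j = k).card + ((Finset.univ.filter fun j => ρ j = k) \ c).card := by
    intro ρ k
    rw [← Finset.card_inter_add_card_sdiff (Finset.univ.filter fun j => ρ j = k) c]
    congr 2
    ext j
    simp [and_comm]
  have hinter : ∀ (s : Finset N) (ρ : N → M) k, s ∩ (Finset.univ.filter fun j => ρ j = k) =
      s.filter fun j => ρ j = k := by
    intro s ρ k
    ext j
    simp
  simp only [Finset.mem_filter, Finset.mem_univ, true_and] at hp₀ hq₀
  subst hp₀ hq₀
  set b : M → ℕ := fun k => ((Finset.univ.filter fun j => σ j = k) \ c).card with hb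
  have hloadσ : ∀ k, (Finset.univ.filter fun j => σ j = k).card =
      (c.filter fun j => σ j = k).card + b k := hsplit σ
  have hloadτ : ∀ k, (Finset.univ.filter fun j => τ j = k).card =
      (c.filter fun j => τ j = k).card + b k := by
    intro k
    rw [hsplit τ k, ← hout k]
  have hopt : ∀ p q, p ≠ q →
      Relation.ReflTransGen (fun p q => ∃ j ∈ c, σ j = p ∧ τ j = q) p q →
      (c.filter fun j => σ j = p).card + b p ≤ (c.filter fun j => σ j = q).card + b q + 1 ∧
      ((c.filter fun j => σ j = p).card + b p = (c.filter fun j => σ j = q).card + b q + 1 →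
        (c.filter fun j => σ j = p).card ≤ (c.filter fun j => σ j = q).card + 1) := by
    intro p q hpq hreach
    obtain ⟨ρ, hρ1, hρ2, hρ3⟩ := exists_shift_s4 c σ τ p q hreach
    have hfeas : Feasible f (fun k => Finset.univ.filter fun j => ρ j = k) := by
      intro k j hj
      have hj' : ρ j = k := (Finset.mem_filter.1 hj).2
      rcases hρ1 j with h | h
      · exact haf k (by simp [← h, hj'])
      · exact hbf k (by simp [← h, hj'])
    have hnot := hmax _ (isAllocation_fibres ρ) hfeas
    have hcount : ∀ S : Finset N, c ⊆ S →
        ((S.filter fun j => ρ j = p).card + 1 = (S.filter fun j => σ j = p).card) ∧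
        ((S.filter fun j => ρ j = q).card = (S.filter fun j => σ j = q).card + 1) ∧
        ∀ m, m ≠ p → m ≠ q →
          (S.filter fun j => ρ j = m).card = (S.filter fun j => σ j = m).card := by
      intro S hS
      refine ⟨?_, ?_, ?_⟩
      · have := hρ3 S hS p
        rw [if_pos rfl, if_neg hpq] at this
        omega
      · have := hρ3 S hS q
        rw [if_neg hpq.symm, if_pos rfl] at this
        omega
      · intro m h1 h2
        have := hρ3 S hS m
        rw [if_neg h1, if_neg h2] at this
        omega
    obtain ⟨u1, u2, u3⟩ := hcount Finset.univ (Finset.subset_univ c)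
    obtain ⟨v1, v2, v3⟩ := hcount c subset_rfl
    rw [← hloadσ p, ← hloadσ q]
    refine ⟨?_, ?_⟩
    · by_contra hcon
      refine hnot (Or.inl ?_)
      exact lex_of_shift hpq (fun k => (Finset.univ.filter fun j => σ j = k).card)
        (fun k => (Finset.univ.filter fun j => ρ j = k).card) u1 u2 u3 (not_le.1 hcon)
    · intro heq
      by_contra hcon
      have hlexc : List.Lex (· < ·)
          (ckernel c (fun k => Finset.univ.filter fun j => ρ j = k))
          (ckernel c (fun k => Finset.univ.filter fun j => σ j = k)) := by
        simp only [ckernel, hinter]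
        exact lex_of_shift hpq (fun k => (c.filter fun j => σ j = k).card)
          (fun k => (c.filter fun j => ρ j = k).card) v1 v2 v3 (not_le.1 hcon)
      refine hnot (Or.inr ⟨?_, ?_, c, hc, hlexc⟩)
      · unfold kernel
        rw [map_eq_of_shift hpq (fun k => (Finset.univ.filter fun j => σ j = k).card)
          (fun k => (Finset.univ.filter fun j => ρ j = k).card) u1 u2 u3 heq.symm]
      · intro c' hc'
        by_cases hcc : c' = c
        · subst hcc; exact Or.inr hlexc
        · left
          have hdisj := hC.2.1 c' hc' c hc hcc
          have : ∀ k, (c'.filter fun j => ρ j = k) = c'.filter fun j => σ j = k := by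
            intro k
            refine Finset.filter_congr fun j hj => ?_
            rw [hρ2 j (Finset.disjoint_left.1 hdisj hj)]
          simp only [ckernel, hinter, this]
  set K : ℕ := Fintype.card N + 1 with hK
  have hpot := potential_le c σ τ b K ((Finset.card_le_univ c).trans (by omega)) (by omega) hopt
  have hσ := sum_comp_eq c σ (fun k => (K : ℤ) ^ (Finset.univ.filter fun j => σ j = k).card)
  have hτ := sum_comp_eq c τ (fun k => (K : ℤ) ^ (Finset.univ.filter fun j => τ j = k).card)
  have hstrict : ∑ j ∈ c, (K : ℤ) ^ (Finset.univ.filter fun j' => τ j' = τ j).card <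
      ∑ j ∈ c, (K : ℤ) ^ (Finset.univ.filter fun j' => σ j' = σ j).card := by
    have hpos : 0 < Fintype.card N := Fintype.card_pos
    have hK1 : (1 : ℤ) < K := by exact_mod_cast (by omega : 1 < K)
    refine Finset.sum_lt_sum (fun j hj => ?_) ⟨j₀, hj₀, ?_⟩
    · exact pow_le_pow_right₀ hK1.le (hle j hj (σ j) (τ j) (by simp) (by simp))
    · exact pow_lt_pow_right₀ hK1 hlt
  simp only [hloadσ] at hσ
  simp only [hloadτ] at hτ
  simp only [hloadσ, hloadτ] at hstrict
  unfold pot at hpot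
  linarith
end

section
/- Let c be a coalition in an ISCG and let a be a feasible allocation. If c blocks a and ã is the allocation induced when c blocks a, then ã c-welfare-dominates a, i.e., w(c,ã) is lexicographically smaller than w(c,a). -/
/-!
Let `x j` and `y j` be the cardinalities of the resources holding agent `j` before and after the
deviation. On the coalition `y ≤ x`, with strict inequality somewhere. Let `s` be the largest value
of `x j` over the members `j` of the coalition with `y j < x j`. For a size `u > s`, a member has
`y j = u` exactly when `x j = u`, since a member with `x j > s` does not change its value. For `u = s`,
every member with `y j = s` has `x j = s`, while a strictly improving member with `x j = s` has
`y j ≠ s`. Hence the two welfare kernels agree in all entries for sizes above `s`, and the entry for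
`s` strictly decreases.
-/

variable {N M : Type*} [Fintype N] [DecidableEq N] [Fintype M] [DecidableEq M]

/-- In an allocation the resource `i` holding `j` is unique, so the existential in the
definition of `wkernel` is a condition on the cardinality of that one resource. -/
lemma IsAllocation.exists_card_iff {N M : Type*} {a : M → Finset N} (ha : IsAllocation a)
    {j : N} {i : M} (hj : j ∈ a i) (s : ℕ) :
    (∃ k : M, j ∈ a k ∧ (a k).card = s) ↔ (a i).card = s := by
  constructor
  · rintro ⟨k, hk, rfl⟩
    by_contra h
    have hne : i ≠ k := by rintro rfl; exact h rfl
    exact Finset.disjoint_left.mp (ha.1 i k hne) hj hk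
  · exact fun h => ⟨i, hj, h⟩

lemma lex_map_range {g h : ℕ → ℕ} {n k : ℕ} (hk : k < n) (heq : ∀ t < k, g t = h t)
    (hlt : g k < h k) :
    List.Lex (· < ·) ((List.range n).map g) ((List.range n).map h) := by
  refine List.lt_iff_exists.mpr (Or.inr ⟨k, by simpa using hk, by simpa using hk, ?_, ?_⟩)
  · intro t ht
    simpa using heq t ht
  · simpa using hlt

/-- Lemma 3(a): if coalition `c` blocks the feasible allocation `a` with induced allocation
`atil`, then `atil` `c`-welfare-dominates `a`. -/
theorem induced_allocation_welfare_dominates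
    {N M : Type*} [Fintype N] [DecidableEq N] [Fintype M] [DecidableEq M]
    (f : M → Finset N) (c : Finset N) (hc : c.Nonempty)
    (a atil : M → Finset N) (ha : IsAllocation a) (haf : Feasible f a)
    (hblock : BlocksVia f c a atil) :
    List.Lex (· < ·) (wkernel c atil) (wkernel c a) := by
  obtain ⟨hb, -, -, hle, j₁, hj₁, i₁, i₂, hi₁, hi₂, hlt₁⟩ := hblock
  choose r hr using ha.2
  choose q hq using hb.2
  have hle' : ∀ j ∈ c, (atil (q j)).card ≤ (a (r j)).card :=
    fun j hj => hle j hj _ _ (hr j) (hq j)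
  have hex : (c.filter fun j => (atil (q j)).card < (a (r j)).card).Nonempty := by
    refine ⟨j₁, Finset.mem_filter.mpr ⟨hj₁, ?_⟩⟩
    rwa [(ha.exists_card_iff (hr j₁) _).mp ⟨i₁, hi₁, rfl⟩,
      (hb.exists_card_iff (hq j₁) _).mp ⟨i₂, hi₂, rfl⟩]
  -- `j₀` is a strictly improving member whose original resource is as crowded as possible.
  obtain ⟨j₀, hj₀, hmax⟩ := Finset.exists_max_image _ (fun j => (a (r j)).card) hex
  obtain ⟨hj₀c, hlt⟩ := Finset.mem_filter.mp hj₀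
  have hstay : ∀ j ∈ c, (a (r j₀)).card < (a (r j)).card →
      (atil (q j)).card = (a (r j)).card := by
    intro j hj h
    refine le_antisymm (hle' j hj) (not_lt.mp fun h' => ?_)
    exact absurd (hmax j (Finset.mem_filter.mpr ⟨hj, h'⟩)) (not_le.mpr h)
  have hn : (a (r j₀)).card ≤ Fintype.card N := Finset.card_le_univ _
  -- Size `s` sits at index `n - s`, which is a valid index because `s > 0`.
  refine lex_map_range (k := Fintype.card N - (a (r j₀)).card) (by omega) ?_ ?_
  · intro t ht
    refine congrArg Finset.card (Finset.filter_congr fun j hj => ?_)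
    rw [ha.exists_card_iff (hr j), hb.exists_card_iff (hq j)]
    have h₁ := hle' j hj
    have h₂ := hstay j hj
    omega
  · refine Finset.card_lt_card (Finset.ssubset_iff_of_subset ?_ |>.mpr ⟨j₀, ?_, ?_⟩)
    · intro j
      simp only [Finset.mem_filter, ha.exists_card_iff (hr j), hb.exists_card_iff (hq j)]
      rintro ⟨hj, h⟩
      have h₁ := hle' j hj
      have h₂ := hstay j hj
      exact ⟨hj, by omega⟩
    · simp only [Finset.mem_filter, ha.exists_card_iff (hr j₀)]
      exact ⟨hj₀c, by omega⟩
    · simp only [Finset.mem_filter, hb.exists_card_iff (hq j₀)]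
      rintro ⟨-, h⟩
      omega
end

section
/- There exist an ISCG, a partition coalition structure C, and a feasible allocation a such that a is a Nash equilibrium, Pareto efficient, and C-stable, yet a is not maximal with respect to the C-balance dominance relation. Specifically: in the ISCG with two resources and fifteen agents where both resources are accessible to every agent, with C = {{1,2,3},{4,5,6},{7,8,9},{10,11,12},{13,14,15}}, the allocation a with a₁ = {1,2,4,5,7,8,10,11} and a₂ = {3,6,9,12,13,14,15} is a Nash equilibrium, Pareto efficient, and C-stable, but the allocation ā with ā₁ = {1,2,4,7,8,10,13,14} and ā₂ = {3,5,6,9,11,12,15} C-balance dominates a. -/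
/-!
In a two-resource game where resource `0` carries exactly one agent more than resource `1`,
let a coalition `c` deviate so that `u` of its members move from `0` to `1` and `v` from `1` to `0`.
The new loads are `|a 0| - u + v` and `|a 1| + u - v`. No mover loses, so `v > 0` forces
`v + 1 ≤ u` and `u > 0` forces `u ≤ v + 1`; hence a nontrivial deviation has `u = v + 1`, which
swaps the two loads. Then every member of `c` on resource `1` must have moved, i.e.
`v = |c ∩ a 1|`, while a strict winner can only be a member of `c` staying on resource `0`,
i.e. `u < |c ∩ a 0|`. So a blocking coalition satisfies `|c ∩ a 0| > |c ∩ a 1| + 1`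
(`not_blocks_of_card_le`). Singletons, the grand coalition and the members of `exC` all violate
this inequality; the remaining claims about the example are finite computations.
-/

variable {N M : Type*} [Fintype N] [DecidableEq N] [Fintype M] [DecidableEq M]

/-- The allocation of Example 2: `a₁ = {1,2,4,5,7,8,10,11}`, `a₂ = {3,6,9,12,13,14,15}`
(agent `k` is encoded as `k - 1 : Fin 15`). -/
def exAlloc : Fin 2 → Finset (Fin 15)
  | 0 => {0, 1, 3, 4, 6, 7, 9, 10}
  | 1 => {2, 5, 8, 11, 12, 13, 14}

/-- The allocation `ā` of Example 2: `ā₁ = {1,2,4,7,8,10,13,14}`, `ā₂ = {3,5,6,9,11,12,15}`. -/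
def exAllocBar : Fin 2 → Finset (Fin 15)
  | 0 => {0, 1, 3, 6, 7, 9, 12, 13}
  | 1 => {2, 4, 5, 8, 10, 11, 14}

/-- The coalition structure `C = {{1,2,3},{4,5,6},{7,8,9},{10,11,12},{13,14,15}}`. -/
def exC : Set (Finset (Fin 15)) :=
  {{0, 1, 2}, {3, 4, 5}, {6, 7, 8}, {9, 10, 11}, {12, 13, 14}}

/-- All resources are accessible to every agent. -/
def exF : Fin 2 → Finset (Fin 15) := fun _ => Finset.univ

/-- Load balance on resource `i` when only members of `c` move: the new load plus the number of
leavers equals the old load plus the number of entrants. -/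
lemma card_add_leavers {N : Type*} [DecidableEq N] {c : Finset N}
    {a b : Fin 2 → Finset N} (ha : IsAllocation a) (hb : IsAllocation b)
    (hfix : ∀ i, a i \ c = b i \ c) {i k : Fin 2} (hik : i ≠ k) :
    (b i).card + (a i ∩ c ∩ b k).card = (a i).card + (a k ∩ c ∩ b i).card := by
  have cover : ∀ d : Fin 2 → Finset N, IsAllocation d → ∀ j, j ∈ d i ∨ j ∈ d k := by
    intro d hd j
    obtain ⟨t, ht⟩ := hd.2 j
    have : t = i ∨ t = k := by omega
    rcases this with rfl | rfl <;> simp [ht]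
  have hda := Finset.disjoint_left.1 (ha.1 i k hik)
  have hdb := Finset.disjoint_left.1 (hb.1 i k hik)
  rw [← Finset.card_union_of_disjoint, ← Finset.card_union_of_disjoint]
  · congr 1
    ext j
    have h1 := Finset.ext_iff.1 (hfix i) j
    have h2 := cover a ha j
    have h3 := cover b hb j
    have h4 := @hda j
    have h5 := @hdb j
    simp only [Finset.mem_sdiff, Finset.mem_union, Finset.mem_inter] at *
    tauto
  · rw [Finset.disjoint_left]
    intro j hj hmem
    simp only [Finset.mem_inter] at hmem
    exact hda hj hmem.1.1
  · rw [Finset.disjoint_left]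
    intro j hj hmem
    simp only [Finset.mem_inter] at hmem
    exact hdb hj hmem.2

/-- The members of `c` on resource `i` split into those who stay and those who move. -/
lemma card_stay_add_move {N : Type*} [DecidableEq N] (c : Finset N)
    (a : Fin 2 → Finset N) {b : Fin 2 → Finset N} (hb : IsAllocation b) (i : Fin 2) :
    (a i ∩ c ∩ b 0).card + (a i ∩ c ∩ b 1).card = (c ∩ a i).card := by
  rw [← Finset.card_union_of_disjoint, ← Finset.inter_union_distrib_left]
  · congr 1
    ext j
    have : j ∈ b 0 ∨ j ∈ b 1 := by
      obtain ⟨t, ht⟩ := hb.2 j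
      fin_cases t
      · exact Or.inl ht
      · exact Or.inr ht
    simp only [Finset.mem_union, Finset.mem_inter]
    tauto
  · exact (hb.1 0 1 (by decide)).mono Finset.inter_subset_right Finset.inter_subset_right

/-- With loads `s + 1` and `s`, a coalition having at most one more member on the heavier resource
than on the lighter one does not block. -/
lemma not_blocks_of_card_le {N : Type*} [DecidableEq N] {f a : Fin 2 → Finset N}
    {c : Finset N} (ha : IsAllocation a) (hcard : (a 0).card = (a 1).card + 1)
    (hc : (c ∩ a 0).card ≤ (c ∩ a 1).card + 1) : ¬ Blocks f c a := by
  rintro ⟨b, hb, -, hfix, hle, j, hjc, i, k, hji, hjk, hlt⟩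
  have e0 := card_add_leavers ha hb hfix (i := 0) (k := 1) (by decide)
  have e1 := card_add_leavers ha hb hfix (i := 1) (k := 0) (by decide)
  have s0 := card_stay_add_move c a hb 0
  have s1 := card_stay_add_move c a hb 1
  have key : ∀ i k : Fin 2, 0 < (a i ∩ c ∩ b k).card → (b k).card ≤ (a i).card := by
    intro i k h
    obtain ⟨x, hx⟩ := Finset.card_pos.1 h
    simp only [Finset.mem_inter] at hx
    exact hle x hx.1.2 i k hx.1.1 hx.2
  have k00 := key 0 0
  have k01 := key 0 1
  have k10 := key 1 0
  have k11 := key 1 1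
  have hpos : 0 < (a i ∩ c ∩ b k).card :=
    Finset.card_pos.2 ⟨j, by simp [hji, hjc, hjk]⟩
  clear key hle hfix hji hjk
  fin_cases i <;> fin_cases k <;> simp only [Fin.zero_eta, Fin.mk_one] at hlt hpos <;> omega

lemma isAllocation_exAlloc : IsAllocation exAlloc := by
  unfold IsAllocation; decide

/-- Closed form of the kernel lists for two resources, which makes them computable by `decide`. -/
lemma sort_reverse_pair (g : Fin 2 → ℕ) :
    (((Finset.univ : Finset (Fin 2)).val.map g).sort (· ≤ ·)).reverse =
      [max (g 0) (g 1), min (g 0) (g 1)] := by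
  have h : (Finset.univ : Finset (Fin 2)).val.map g
      = (([min (g 0) (g 1), max (g 0) (g 1)] : List ℕ) : Multiset ℕ) := by
    have : (Finset.univ : Finset (Fin 2)).val.map g = (([g 0, g 1] : List ℕ) : Multiset ℕ) := rfl
    rw [this]
    rcases le_total (g 0) (g 1) with h | h
    · simp [h]
    · simp only [h, min_eq_right, max_eq_left]
      exact Multiset.coe_eq_coe.2 (List.Perm.swap _ _ _)
  rw [h, Multiset.coe_sort, List.mergeSort_of_pairwise]
  · simp
  · simp

/-- Example 2: `a` is a Nash equilibrium, Pareto efficient and `C`-stable, but it is not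
maximal w.r.t. `C`-balance dominance, since `ā` `C`-balance dominates it. -/
theorem stable_not_maximal_example :
    IsPartitionStructure exC ∧
    IsAllocation exAlloc ∧ Feasible exF exAlloc ∧
    (∀ j : Fin 15, ¬ Blocks exF {j} exAlloc) ∧
    (¬ Blocks exF Finset.univ exAlloc) ∧
    (∀ c ∈ exC, ¬ Blocks exF c exAlloc) ∧
    IsAllocation exAllocBar ∧ Feasible exF exAllocBar ∧
    BalanceDominates exC exAllocBar exAlloc := by
  have hcard : (exAlloc 0).card = (exAlloc 1).card + 1 := by decide
  refine ⟨⟨?_, ?_, ?_⟩, isAllocation_exAlloc, fun i => Finset.subset_univ _, fun j => ?_, ?_, ?_,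
    ?_, fun i => Finset.subset_univ _, Or.inr ⟨?_, ?_, ?_⟩⟩
  · simp [exC]
  · simp only [exC, Set.mem_insert_iff, Set.mem_singleton_iff, forall_eq_or_imp, forall_eq]
    refine ⟨?_, ?_, ?_, ?_, ?_⟩ <;> decide
  · simp only [exC, Set.mem_insert_iff, Set.mem_singleton_iff, exists_eq_or_imp, exists_eq_left]
    decide
  · refine not_blocks_of_card_le isAllocation_exAlloc hcard ?_
    revert j
    decide
  · exact not_blocks_of_card_le isAllocation_exAlloc hcard (by decide)
  · intro c hc
    refine not_blocks_of_card_le isAllocation_exAlloc hcard ?_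
    revert c
    simp only [exC, Set.mem_insert_iff, Set.mem_singleton_iff, forall_eq_or_imp, forall_eq]
    decide
  · unfold IsAllocation; decide
  · simp only [kernel, sort_reverse_pair]
    decide
  · simp only [exC, Set.mem_insert_iff, Set.mem_singleton_iff, forall_eq_or_imp, forall_eq,
      ckernel, sort_reverse_pair]
    -- Only the last coalition changes its kernel, from `[3, 0]` to `[2, 1]`.
    refine ⟨Or.inl (by decide), Or.inl (by decide), Or.inl (by decide), Or.inl (by decide),
      Or.inr (List.Lex.rel (by decide))⟩
  · refine ⟨{12, 13, 14}, by simp [exC], ?_⟩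
    simp only [ckernel, sort_reverse_pair]
    exact List.Lex.rel (by decide)
end

section
/- The existence guarantee of Theorem 1 fails for coalition structures with overlapping coalitions: there exist an ISCG and a coalition structure C that is not a partition such that no feasible allocation is C-stable. Specifically: in the ISCG with resources M = {1,2} and agents N = {1,2,3}, where f₁ = {1,3} and f₂ = {2,3} (agent 1 can only access resource 1, agent 2 can only access resource 2, agent 3 can access both), for the coalition structure C = {{1,3},{2,3}}, no feasible allocation is C-stable. -/
/-!
Agents `0` and `1` each have only one accessible resource, so a feasible allocation is determined
by the choice of agent `2` (`feasible_allocation_cases`). Whichever resource agent `2` shares, the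
coalition of agent `2` and its current partner blocks by sending agent `2` to the other resource:
agent `2` still shares with one agent, while the partner is left alone and strictly gains.
Hence the two feasible allocations are blocked by `{0, 2}` and `{1, 2}` respectively.
-/

variable {N M : Type*} [Fintype N] [DecidableEq N] [Fintype M] [DecidableEq M]

/-- Example 4: agent 1 can only access resource 1, agent 2 can only access resource 2, and
agent 3 can access both (agent `k` encoded as `k - 1 : Fin 3`, resource likewise). -/
def exF4 : Fin 2 → Finset (Fin 3)
  | 0 => {0, 2}
  | 1 => {1, 2}

/-- The overlapping coalition structure `C = {{1,3},{2,3}}`. -/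
def exC4 : Set (Finset (Fin 3)) := {{0, 2}, {1, 2}}

/-- The only freedom in a feasible allocation is the resource used by agent `2`. -/
lemma feasible_allocation_cases (a : Fin 2 → Finset (Fin 3)) (ha : IsAllocation a)
    (hf : Feasible exF4 a) : a = ![{0, 2}, {1}] ∨ a = ![{0}, {1, 2}] := by
  unfold IsAllocation Feasible at *
  revert a
  decide

/-- Example 4: for the non-partition coalition structure `C = {{1,3},{2,3}}`,
no feasible allocation is `C`-stable. -/
theorem overlapping_coalitions_no_stable_example :
    ¬ IsPartitionStructure exC4 ∧
    ∀ a : Fin 2 → Finset (Fin 3), IsAllocation a → Feasible exF4 a →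
      ∃ c ∈ exC4, Blocks exF4 c a := by
  refine ⟨fun h => ?_, fun a ha hf => ?_⟩
  · exact absurd (h.2.1 {0, 2} (by simp [exC4]) {1, 2} (by simp [exC4]) (by decide)) (by decide)
  · rcases feasible_allocation_cases a ha hf with rfl | rfl
    · exact ⟨{0, 2}, by simp [exC4], ![{0}, {1, 2}],
        by unfold BlocksVia IsAllocation Feasible; decide⟩
    · exact ⟨{1, 2}, by simp [exC4], ![{0, 2}, {1}],
        by unfold BlocksVia IsAllocation Feasible; decide⟩
end
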